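/- arXiv:2407.05028 — 3 statements merged into one kernel-verified Lean document; each statement's English description precedes it below -/
import Mathlib

section
/- Let s and e be composable labelled transition systems with s eco e, and let X_s ⊆ Q_s, X_e ⊆ Q_e. Then (X_s, X_e) ∈ R_U(s,e) if and only if there exists σ ∈ Utraces(s ∥ e) with ⟨s ∥ e after σ⟩ = (X_s, X_e). -/
/-- Labels extended with the quiescence label `δ`. -/
inductive ELabel (Lab : Type) : Type
  | lab : Lab → ELabel Lab
  | delta : ELabel Lab

namespace ELabel

/-- Membership of an extended label in `𝓛^δ = 𝓛 ∪ {δ}`. -/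
def inL {Lab : Type} (Ls : Set Lab) : ELabel Lab → Prop
  | lab ℓ => ℓ ∈ Ls
  | delta => True

end ELabel

/-- A trace lies in `(𝓛^δ)*`. -/
def TraceIn {Lab : Type} (Ls : Set Lab) (σ : List (ELabel Lab)) : Prop :=
  ∀ x ∈ σ, ELabel.inL Ls x

/-- A labelled transition system.  `T q none q'` is an internal `τ`-step,
`T q (some ℓ) q'` is a step labelled `ℓ`. -/
structure LTS (Q : Type) (Lab : Type) where
  I : Set Lab
  U : Set Lab
  T : Q → Option Lab → Q → Prop
  q0 : Q

namespace LTS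

variable {Q Lab : Type}

/-- The label set `L = I ∪ U`. -/
def L (M : LTS Q Lab) : Set Lab := M.I ∪ M.U

/-- Standing assumptions on all LTSs: countable, disjoint input/output label
sets, transitions labelled within `L`, strong convergence (no infinite
`τ`-sequences), and image-finiteness. -/
def WellFormed (M : LTS Q Lab) : Prop :=
  M.I.Countable ∧ M.U.Countable ∧ Disjoint M.I M.U ∧
  (∀ q ℓ q', M.T q (some ℓ) q' → ℓ ∈ M.L) ∧
  (¬ ∃ f : ℕ → Q, ∀ n, M.T (f n) none (f (n + 1))) ∧
  (∀ q a, {q' | M.T q a q'}.Finite)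

/-- A state is quiescent if neither an output nor `τ` is enabled in it. -/
def Quiescent (M : LTS Q Lab) (q : Q) : Prop :=
  (∀ x ∈ M.U, ∀ q', ¬ M.T q (some x) q') ∧ ∀ q', ¬ M.T q none q'

/-- A single visible step `q --x--> q'` for `x ∈ L^δ`, where the quiescence
label `δ` gives a self-loop at quiescent states. -/
def VStep (M : LTS Q Lab) (q : Q) : ELabel Lab → Q → Prop
  | .lab ℓ, q' => M.T q (some ℓ) q'
  | .delta, q' => q' = q ∧ M.Quiescent q

/-- Zero or more `τ`-steps: `q ==ε==> q'`. -/
def Eps (M : LTS Q Lab) : Q → Q → Prop :=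
  Relation.ReflTransGen fun a b => M.T a none b

/-- Weak transition `q ==σ==> q'` for `σ ∈ (L^δ)*`. -/
inductive W (M : LTS Q Lab) : Q → List (ELabel Lab) → Q → Prop
  | nil {q q' : Q} : M.Eps q q' → W M q [] q'
  | snoc {q q1 q2 q' : Q} {σ : List (ELabel Lab)} {x : ELabel Lab} :
      W M q σ q1 → M.VStep q1 x q2 → M.Eps q2 q' → W M q (σ ++ [x]) q'

/-- `X after σ`, for a set of states `X`. -/
def afterSet (M : LTS Q Lab) (X : Set Q) (σ : List (ELabel Lab)) : Set Q :=
  {q' | ∃ q ∈ X, M.W q σ q'}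

/-- `M after σ`, from the initial state. -/
def after (M : LTS Q Lab) (σ : List (ELabel Lab)) : Set Q :=
  {q' | M.W M.q0 σ q'}

/-- The predicate underlying `out(q) ⊆ U ∪ {δ}`. -/
def outLabel (M : LTS Q Lab) (q : Q) : ELabel Lab → Prop
  | .lab ℓ => ℓ ∈ M.U ∧ ∃ q', M.T q (some ℓ) q'
  | .delta => M.Quiescent q

/-- `out(q)`. -/
def outq (M : LTS Q Lab) (q : Q) : Set (ELabel Lab) :=
  {x | M.outLabel q x}

/-- `in(q) = {ℓ ∈ I | q ==ℓ==>}`. -/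
def inq (M : LTS Q Lab) (q : Q) : Set Lab :=
  {ℓ | ℓ ∈ M.I ∧ ∃ q', M.W q [ELabel.lab ℓ] q'}

/-- `out(X) = ⋃_{q ∈ X} out(q)`. -/
def outSet (M : LTS Q Lab) (X : Set Q) : Set (ELabel Lab) :=
  ⋃ q ∈ X, M.outq q

/-- `in(X) = ⋂_{q ∈ X} in(q)`. -/
def inSet (M : LTS Q Lab) (X : Set Q) : Set Lab :=
  ⋂ q ∈ X, M.inq q

/-- Input-enabledness: `M` is an IOTS. -/
def InputEnabled (M : LTS Q Lab) : Prop :=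
  ∀ q, ∀ ℓ ∈ M.I, ∃ q', M.W q [ELabel.lab ℓ] q'

/-- `Utraces(M)`. -/
def Utraces (M : LTS Q Lab) : Set (List (ELabel Lab)) :=
  {σ | TraceIn M.L σ ∧ (∃ q', M.W M.q0 σ q') ∧
    ∀ σ1 ℓ σ2, σ = σ1 ++ ELabel.lab ℓ :: σ2 → ℓ ∈ M.I →
      ∀ q, M.W M.q0 σ1 q → ∃ q', M.W q [ELabel.lab ℓ] q'}

/-- An LTS is utrace-closed when every trace over `(L^δ)*` that it can
perform is a utrace. -/
def UtraceClosed (M : LTS Q Lab) : Prop :=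
  ∀ σ : List (ELabel Lab), TraceIn M.L σ → (∃ q', M.W M.q0 σ q') → σ ∈ M.Utraces

end LTS

/-- `i uioco s`. -/
def Uioco {Qi Qs Lab : Type} (i : LTS Qi Lab) (s : LTS Qs Lab) : Prop :=
  ∀ σ ∈ s.Utraces, i.outSet (i.after σ) ⊆ s.outSet (s.after σ)

/-- Composability: disjoint output label sets. -/
def Composable {Qs Qe Lab : Type} (s : LTS Qs Lab) (e : LTS Qe Lab) : Prop :=
  s.U ∩ e.U = ∅

/-- Parallel composition `s ∥ e`. -/
def par {Qs Qe Lab : Type} (s : LTS Qs Lab) (e : LTS Qe Lab) : LTS (Qs × Qe) Lab where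
  I := (s.I \ e.U) ∪ (e.I \ s.U)
  U := s.U ∪ e.U
  T := fun p a p' =>
    match a with
    | none =>
        (s.T p.1 none p'.1 ∧ p'.2 = p.2) ∨ (e.T p.2 none p'.2 ∧ p'.1 = p.1)
    | some ℓ =>
        (ℓ ∈ s.L ∧ ℓ ∉ e.L ∧ s.T p.1 (some ℓ) p'.1 ∧ p'.2 = p.2) ∨
        (ℓ ∈ e.L ∧ ℓ ∉ s.L ∧ e.T p.2 (some ℓ) p'.2 ∧ p'.1 = p.1) ∨
        (ℓ ∈ s.L ∧ ℓ ∈ e.L ∧ s.T p.1 (some ℓ) p'.1 ∧ e.T p.2 (some ℓ) p'.2)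
  q0 := (s.q0, e.q0)

/-- `s accepts e`: along utraces of `s ∥ e`, every output of `e` that is an
input of `s` is (weakly) enabled in `s`. -/
def Accepts {Qs Qe Lab : Type} (s : LTS Qs Lab) (e : LTS Qe Lab) : Prop :=
  ∀ σ ∈ (par s e).Utraces, ∀ qs qe, (par s e).W (par s e).q0 σ (qs, qe) →
    ∀ ℓ, ELabel.lab ℓ ∈ e.outq qe → ℓ ∈ s.I → ℓ ∈ s.inq qs

/-- `s mutually accepts e`. -/
def MutuallyAccepts {Qs Qe Lab : Type} (s : LTS Qs Lab) (e : LTS Qe Lab) : Prop :=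
  Accepts s e ∧ Accepts e s

/-- `R` is an ecosim for `s` and `e`. -/
def IsEcosim {Qs Qe Lab : Type} (s : LTS Qs Lab) (e : LTS Qe Lab)
    (R : Set (Set Qs × Set Qe)) : Prop :=
  (s.after [], e.after []) ∈ R ∧
  ∀ Xs Xe, (Xs, Xe) ∈ R →
    (∀ ℓ, ELabel.lab ℓ ∈ e.outSet Xe → ℓ ∈ s.I →
      ℓ ∈ s.inSet Xs ∧
        (s.afterSet Xs [ELabel.lab ℓ], e.afterSet Xe [ELabel.lab ℓ]) ∈ R) ∧
    (∀ ℓ, ELabel.lab ℓ ∈ s.outSet Xs → ℓ ∈ e.I →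
      ℓ ∈ e.inSet Xe ∧
        (s.afterSet Xs [ELabel.lab ℓ], e.afterSet Xe [ELabel.lab ℓ]) ∈ R) ∧
    (∀ ℓ, (ELabel.lab ℓ ∈ e.outSet Xe ∨ ℓ ∈ e.inSet Xe) → ℓ ∉ s.L →
      (Xs, e.afterSet Xe [ELabel.lab ℓ]) ∈ R) ∧
    (∀ ℓ, (ELabel.lab ℓ ∈ s.outSet Xs ∨ ℓ ∈ s.inSet Xs) → ℓ ∉ e.L →
      (s.afterSet Xs [ELabel.lab ℓ], Xe) ∈ R) ∧
    (∀ ℓ, ℓ ∈ s.inSet Xs → ℓ ∈ e.inSet Xe →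
      (s.afterSet Xs [ELabel.lab ℓ], e.afterSet Xe [ELabel.lab ℓ]) ∈ R) ∧
    (ELabel.delta ∈ s.outSet Xs → ELabel.delta ∈ e.outSet Xe →
      (s.afterSet Xs [ELabel.delta], e.afterSet Xe [ELabel.delta]) ∈ R)

/-- `s eco e`: there exists an ecosim for `s` and `e`. -/
def Eco {Qs Qe Lab : Type} (s : LTS Qs Lab) (e : LTS Qe Lab) : Prop :=
  ∃ R, IsEcosim s e R

/-- `R_U(s,e)`: the smallest relation closed under the given rules. -/
inductive RU {Qs Qe Lab : Type} (s : LTS Qs Lab) (e : LTS Qe Lab) :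
    Set Qs → Set Qe → Prop
  | base : RU s e (s.after []) (e.after [])
  | syncOutE {Xs : Set Qs} {Xe : Set Qe} (ℓ : Lab) :
      RU s e Xs Xe → ELabel.lab ℓ ∈ e.outSet Xe → ℓ ∈ s.I →
      RU s e (s.afterSet Xs [ELabel.lab ℓ]) (e.afterSet Xe [ELabel.lab ℓ])
  | syncOutS {Xs : Set Qs} {Xe : Set Qe} (ℓ : Lab) :
      RU s e Xs Xe → ELabel.lab ℓ ∈ s.outSet Xs → ℓ ∈ e.I →
      RU s e (s.afterSet Xs [ELabel.lab ℓ]) (e.afterSet Xe [ELabel.lab ℓ])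
  | internalE {Xs : Set Qs} {Xe : Set Qe} (ℓ : Lab) :
      RU s e Xs Xe → (ELabel.lab ℓ ∈ e.outSet Xe ∨ ℓ ∈ e.inSet Xe) → ℓ ∉ s.L →
      RU s e Xs (e.afterSet Xe [ELabel.lab ℓ])
  | internalS {Xs : Set Qs} {Xe : Set Qe} (ℓ : Lab) :
      RU s e Xs Xe → (ELabel.lab ℓ ∈ s.outSet Xs ∨ ℓ ∈ s.inSet Xs) → ℓ ∉ e.L →
      RU s e (s.afterSet Xs [ELabel.lab ℓ]) Xe
  | syncIn {Xs : Set Qs} {Xe : Set Qe} (ℓ : Lab) :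
      RU s e Xs Xe → ℓ ∈ s.inSet Xs → ℓ ∈ e.inSet Xe →
      RU s e (s.afterSet Xs [ELabel.lab ℓ]) (e.afterSet Xe [ELabel.lab ℓ])
  | qdelta {Xs : Set Qs} {Xe : Set Qe} :
      RU s e Xs Xe → ELabel.delta ∈ s.outSet Xs → ELabel.delta ∈ e.outSet Xe →
      RU s e (s.afterSet Xs [ELabel.delta]) (e.afterSet Xe [ELabel.delta])

open Classical in
/-- Projection `σ↾𝓛^δ` of a trace onto an (extended) label set: keeps `δ`
and the labels in `Ls`, removes all other labels. -/
noncomputable def projD {Lab : Type} (σ : List (ELabel Lab)) (Ls : Set Lab) :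
    List (ELabel Lab) :=
  σ.filter fun x => decide (ELabel.inL Ls x)

open Classical in
/-- Projection `σ↾𝓛` of a trace of plain labels onto a label set. -/
noncomputable def projL {Lab : Type} (σ : List Lab) (Ls : Set Lab) : List Lab :=
  σ.filter fun ℓ => decide (ℓ ∈ Ls)

open Classical in
/-- Substitution `σ[θ/δ]` of the label `θ` by the quiescence label `δ`. -/
noncomputable def substTheta {Lab : Type} (θ : Lab) (σ : List Lab) :
    List (ELabel Lab) :=
  σ.map fun ℓ => if ℓ = θ then ELabel.delta else ELabel.lab ℓ

/-- `⟨X⟩`: componentwise collection of a set of pairs of states. -/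
def collect {Qs Qe : Type} (X : Set (Qs × Qe)) : Set Qs × Set Qe :=
  (Prod.fst '' X, Prod.snd '' X)

/-- `q_s accepts q_e over σ`. -/
def AcceptsOver {Qs Qe Lab : Type} (s : LTS Qs Lab) (e : LTS Qe Lab)
    (qs : Qs) (qe : Qe) (σ : List (ELabel Lab)) : Prop :=
  ∀ σ1 σ2 : List (ELabel Lab), σ1 ++ σ2 = σ →
    ∀ (qs' : Qs) (qe' : Qe), (par s e).W (qs, qe) σ1 (qs', qe') →
      ∀ ℓ, ELabel.lab ℓ ∈ e.outq qe' → ℓ ∈ s.I → ℓ ∈ s.inq qs' ∧ ℓ ∈ e.U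

/-- `q_s mutually accepts q_e over σ`. -/
def MutuallyAcceptsOver {Qs Qe Lab : Type} (s : LTS Qs Lab) (e : LTS Qe Lab)
    (qs : Qs) (qe : Qe) (σ : List (ELabel Lab)) : Prop :=
  AcceptsOver s e qs qe σ ∧ AcceptsOver e s qe qs σ

/-- A test case: a quasi-finite tree-shaped LTS without `τ`-transitions, with
terminal states `pass` and `fail` carrying input self-loops, a special
quiescence-observation input `θ`, at most one output transition per state,
and receptive to all inputs other than `θ`. -/
structure TestCase (Qt Lab : Type) extends LTS Qt Lab where
  passS : Qt
  failS : Qt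
  theta : Lab
  theta_input : theta ∈ I
  no_tau : ∀ q q', ¬ T q none q'
  tree : ∀ q, q ≠ q0 → q ≠ passS → q ≠ failS →
    ∃! p : Qt × Option Lab, T p.1 p.2 q
  pass_loops : ∀ ℓ ∈ I, T passS (some ℓ) passS
  pass_terminal : ∀ a q', T passS a q' → q' = passS ∧ ∃ ℓ ∈ I, a = some ℓ
  fail_loops : ∀ ℓ ∈ I, T failS (some ℓ) failS
  fail_terminal : ∀ a q', T failS a q' → q' = failS ∧ ∃ ℓ ∈ I, a = some ℓ
  one_output : ∀ q ℓ ℓ' q' q'', ℓ ∈ U → ℓ' ∈ U →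
    T q (some ℓ) q' → T q (some ℓ') q'' → ℓ = ℓ' ∧ q' = q''
  receptive : ∀ q, ∀ ℓ ∈ I, ℓ ≠ theta → ∃ q', T q (some ℓ) q'

/-- Test execution `t ⫿ i` of a test case `t` with an implementation `i`. -/
def testExec {Qt Qi Lab : Type} (t : TestCase Qt Lab) (i : LTS Qi Lab) :
    LTS (Qt × Qi) Lab where
  I := ∅
  U := i.U ∪ (t.toLTS.L \ {t.theta})
  T := fun p a p' =>
    match a with
    | none => i.T p.2 none p'.2 ∧ p'.1 = p.1
    | some ℓ =>
        (ℓ ∈ i.L ∧ ℓ ∉ t.toLTS.L ∧ i.T p.2 (some ℓ) p'.2 ∧ p'.1 = p.1) ∨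
        (ℓ ∈ t.toLTS.L ∧ ℓ ∉ i.L ∧ ℓ ≠ t.theta ∧ t.T p.1 (some ℓ) p'.1 ∧ p'.2 = p.2) ∨
        (ℓ ∈ i.L ∧ ℓ ∈ t.toLTS.L ∧ t.T p.1 (some ℓ) p'.1 ∧ i.T p.2 (some ℓ) p'.2) ∨
        (ℓ = t.theta ∧ t.T p.1 (some ℓ) p'.1 ∧ p'.2 = p.2 ∧ i.Quiescent p.2)
  q0 := (t.q0, i.q0)

namespace LTS

variable {Q Lab : Type}

def Clo (M : LTS Q Lab) (X : Set Q) : Prop := ∀ q ∈ X, ∀ q', M.Eps q q' → q' ∈ X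

def post (M : LTS Q Lab) (X : Set Q) (x : ELabel Lab) : Set Q :=
  {q' | ∃ q ∈ X, ∃ q2, M.VStep q x q2 ∧ M.Eps q2 q'}

def ec (M : LTS Q Lab) (q : Q) : Set Q := {q' | M.Eps q q'}

theorem W_nil_iff (M : LTS Q Lab) (q q' : Q) : M.W q [] q' ↔ M.Eps q q' := by
  constructor
  · intro h
    generalize hσ : ([] : List (ELabel Lab)) = σ at h
    cases h with
    | nil h => exact h
    | snoc _ _ _ => simp at hσ
  · exact W.nil

theorem W_snoc_iff (M : LTS Q Lab) (q q' : Q) (σ : List (ELabel Lab)) (x : ELabel Lab) :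
    M.W q (σ ++ [x]) q' ↔ ∃ q1, M.W q σ q1 ∧ ∃ q2, M.VStep q1 x q2 ∧ M.Eps q2 q' := by
  constructor
  · intro h
    generalize hσ : σ ++ [x] = ρ at h
    cases h with
    | nil h => simp at hσ
    | @snoc q1 q2 _ σ' x' h1 h2 h3 =>
      obtain ⟨rfl, h⟩ := List.append_inj' hσ rfl
      obtain rfl : x = x' := by simpa using h
      exact ⟨_, h1, _, h2, h3⟩
  · rintro ⟨q1, h1, q2, h2, h3⟩
    exact W.snoc h1 h2 h3

theorem W_one_iff (M : LTS Q Lab) (q q' : Q) (x : ELabel Lab) :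
    M.W q [x] q' ↔ q' ∈ M.post (M.ec q) x := by
  have := M.W_snoc_iff q q' [] x
  simp only [List.nil_append, W_nil_iff] at this
  exact this

theorem after_snoc (M : LTS Q Lab) (σ : List (ELabel Lab)) (x : ELabel Lab) :
    M.after (σ ++ [x]) = M.post (M.after σ) x := by
  ext q'
  exact M.W_snoc_iff M.q0 q' σ x

theorem after_nil (M : LTS Q Lab) : M.after [] = M.ec M.q0 := by
  ext q'
  exact M.W_nil_iff M.q0 q'

theorem clo_ec (M : LTS Q Lab) (q : Q) : M.Clo (M.ec q) :=
  fun _ h _ h' => Relation.ReflTransGen.trans h h'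

theorem mem_ec (M : LTS Q Lab) (q : Q) : q ∈ M.ec q := Relation.ReflTransGen.refl

theorem clo_post (M : LTS Q Lab) (X : Set Q) (x : ELabel Lab) : M.Clo (M.post X x) := by
  rintro q ⟨a, ha, b, hb, hc⟩ q' h'
  exact ⟨a, ha, b, hb, Relation.ReflTransGen.trans hc h'⟩

theorem afterSet_eq (M : LTS Q Lab) {X : Set Q} (hX : M.Clo X) (x : ELabel Lab) :
    M.afterSet X [x] = M.post X x := by
  ext q'
  constructor
  · rintro ⟨q, hq, h⟩
    rw [W_one_iff] at h
    obtain ⟨a, ha, h⟩ := h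
    exact ⟨a, hX _ hq _ ha, h⟩
  · rintro ⟨q, hq, h⟩
    exact ⟨q, hq, (M.W_one_iff _ _ _).2 ⟨q, M.mem_ec q, h⟩⟩

theorem post_ec_sub (M : LTS Q Lab) {X : Set Q} (hX : M.Clo X) {q : Q} (hq : q ∈ X)
    (x : ELabel Lab) : M.post (M.ec q) x ⊆ M.post X x := by
  rintro q' ⟨a, ha, h⟩
  exact ⟨a, hX _ hq _ ha, h⟩

theorem mem_inSet (M : LTS Q Lab) (X : Set Q) (l : Lab) :
    l ∈ M.inSet X ↔ ∀ q ∈ X, l ∈ M.I ∧ (M.post (M.ec q) (.lab l)).Nonempty := by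
  simp only [inSet, Set.mem_iInter, inq, Set.mem_ofPred_eq, W_one_iff]
  rfl

theorem mem_outSet (M : LTS Q Lab) (X : Set Q) (l : Lab) :
    .lab l ∈ M.outSet X ↔ ∃ q ∈ X, l ∈ M.U ∧ ∃ q', M.T q (some l) q' := by
  simp [outSet, outq, outLabel]
  try tauto

theorem mem_outSet_delta (M : LTS Q Lab) (X : Set Q) :
    .delta ∈ M.outSet X ↔ ∃ q ∈ X, M.Quiescent q := by
  simp [outSet, outq, outLabel]

theorem mem_outSet_iff (M : LTS Q Lab) (X : Set Q) {l : Lab} (hl : l ∈ M.U) :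
    .lab l ∈ M.outSet X ↔ (M.post X (.lab l)).Nonempty := by
  rw [mem_outSet]
  constructor
  · rintro ⟨q, hq, _, q', h⟩
    exact ⟨q', q, hq, q', h, M.mem_ec q'⟩
  · rintro ⟨q', q, hq, q2, h, _⟩
    exact ⟨q, hq, hl, q2, h⟩

theorem delta_iff (M : LTS Q Lab) (X : Set Q) :
    .delta ∈ M.outSet X ↔ (M.post X .delta).Nonempty := by
  rw [mem_outSet_delta]
  constructor
  · rintro ⟨q, hq, h⟩
    exact ⟨q, q, hq, q, ⟨rfl, h⟩, M.mem_ec q⟩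
  · rintro ⟨q', q, hq, q2, ⟨_, h⟩, _⟩
    exact ⟨q, hq, h⟩

theorem in_post (M : LTS Q Lab) {X : Set Q} (hX : M.Clo X) (hn : X.Nonempty) {l : Lab}
    (h : l ∈ M.inSet X) : l ∈ M.I ∧ (M.post X (.lab l)).Nonempty := by
  rw [mem_inSet] at h
  obtain ⟨q, hq⟩ := hn
  exact ⟨(h q hq).1, (h q hq).2.mono (M.post_ec_sub hX hq _)⟩

theorem utraces_snoc (M : LTS Q Lab) (σ : List (ELabel Lab)) (x : ELabel Lab) :
    σ ++ [x] ∈ M.Utraces ↔ σ ∈ M.Utraces ∧ ELabel.inL M.L x ∧ (M.post (M.after σ) x).Nonempty ∧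
      ∀ l, x = .lab l → l ∈ M.I → ∀ q ∈ M.after σ, (M.post (M.ec q) x).Nonempty := by
  constructor
  · rintro ⟨h1, ⟨q', h2⟩, h3⟩
    have h2' : q' ∈ M.post (M.after σ) x := by rw [← after_snoc]; exact h2
    refine ⟨⟨fun y hy => h1 y (by simp [hy]), ?_, ?_⟩, h1 x (by simp), ⟨q', h2'⟩, ?_⟩
    · obtain ⟨q, hq, _⟩ := h2'
      exact ⟨q, hq⟩
    · intro σ1 l σ2 hσ hl q hq
      exact h3 σ1 l (σ2 ++ [x]) (by simp [hσ]) hl q hq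
    · rintro l rfl hl q hq
      obtain ⟨q', h⟩ := h3 σ l [] rfl hl q hq
      exact ⟨q', (M.W_one_iff _ _ _).1 h⟩
  · rintro ⟨⟨h1, h2, h3⟩, h4, ⟨q', h5⟩, h6⟩
    refine ⟨?_, ⟨q', ?_⟩, ?_⟩
    · intro y hy
      rcases List.mem_append.1 hy with hy | hy
      · exact h1 y hy
      · obtain rfl : y = x := by simpa using hy
        exact h4
    · rw [← after_snoc] at h5; exact h5
    · intro σ1 l σ2 hσ hl q hq
      rcases List.eq_nil_or_concat σ2 with rfl | ⟨σ3, y, rfl⟩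
      · obtain ⟨rfl, h⟩ := List.append_inj' hσ rfl
        obtain rfl : x = .lab l := by simpa using h
        obtain ⟨q', h⟩ := h6 l rfl hl q hq
        exact ⟨q', (M.W_one_iff _ _ _).2 h⟩
      · have hσ' : σ ++ [x] = (σ1 ++ .lab l :: σ3) ++ [y] := by simpa using hσ
        obtain ⟨h, _⟩ := List.append_inj' hσ' rfl
        exact h3 σ1 l σ3 h hl q hq

end LTS

section
variable {Qs Qe Lab : Type} (s : LTS Qs Lab) (e : LTS Qe Lab)

theorem par_eps (p p' : Qs × Qe) :
    (par s e).Eps p p' ↔ s.Eps p.1 p'.1 ∧ e.Eps p.2 p'.2 := by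
  constructor
  · intro h
    induction h with
    | refl => exact ⟨.refl, .refl⟩
    | tail _ h ih =>
      rcases h with ⟨h, h'⟩ | ⟨h, h'⟩
      · exact ⟨ih.1.tail h, h' ▸ ih.2⟩
      · exact ⟨h' ▸ ih.1, ih.2.tail h⟩
  · obtain ⟨a, b⟩ := p
    obtain ⟨a', b'⟩ := p'
    rintro ⟨h1, h2⟩
    dsimp only at h1 h2
    have A : (par s e).Eps (a, b) (a', b) := by
      induction h1 with
      | refl => exact .refl
      | tail _ h ih => exact ih.tail (Or.inl ⟨h, rfl⟩)
    have B : (par s e).Eps (a', b) (a', b') := by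
      clear A
      induction h2 with
      | refl => exact .refl
      | tail _ h ih => exact ih.tail (Or.inr ⟨h, rfl⟩)
    exact Relation.ReflTransGen.trans A B

theorem par_ec (p : Qs × Qe) : (par s e).ec p = s.ec p.1 ×ˢ e.ec p.2 := by
  ext p'
  exact par_eps s e p p'

theorem post_sync (Xs : Set Qs) (Xe : Set Qe) {l : Lab} (h1 : l ∈ s.L) (h2 : l ∈ e.L) :
    (par s e).post (Xs ×ˢ Xe) (.lab l) = s.post Xs (.lab l) ×ˢ e.post Xe (.lab l) := by
  ext ⟨a, b⟩
  constructor
  · rintro ⟨⟨a1, b1⟩, ⟨ha, hb⟩, ⟨a2, b2⟩, hT, hE⟩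
    rw [par_eps] at hE
    rcases hT with ⟨_, h, _⟩ | ⟨_, h, _⟩ | ⟨_, _, h3, h4⟩
    · exact absurd h2 h
    · exact absurd h1 h
    · exact ⟨⟨a1, ha, a2, h3, hE.1⟩, ⟨b1, hb, b2, h4, hE.2⟩⟩
  · rintro ⟨⟨a1, ha, a2, h3, h5⟩, ⟨b1, hb, b2, h4, h6⟩⟩
    exact ⟨(a1, b1), ⟨ha, hb⟩, (a2, b2), Or.inr (Or.inr ⟨h1, h2, h3, h4⟩),
      (par_eps s e _ _).2 ⟨h5, h6⟩⟩

theorem post_left (Xs : Set Qs) {Xe : Set Qe} (hc : e.Clo Xe) {l : Lab} (h1 : l ∈ s.L)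
    (h2 : l ∉ e.L) :
    (par s e).post (Xs ×ˢ Xe) (.lab l) = s.post Xs (.lab l) ×ˢ Xe := by
  ext ⟨a, b⟩
  constructor
  · rintro ⟨⟨a1, b1⟩, ⟨ha, hb⟩, ⟨a2, b2⟩, hT, hE⟩
    rw [par_eps] at hE
    rcases hT with ⟨_, _, h3, h4⟩ | ⟨_, h, _⟩ | ⟨_, h, _, _⟩
    · obtain rfl : b2 = b1 := h4
      exact ⟨⟨a1, ha, a2, h3, hE.1⟩, hc _ hb _ hE.2⟩
    · exact absurd h1 h
    · exact absurd h h2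
  · rintro ⟨⟨a1, ha, a2, h3, h5⟩, hb⟩
    exact ⟨(a1, b), ⟨ha, hb⟩, (a2, b), Or.inl ⟨h1, h2, h3, rfl⟩,
      (par_eps s e _ _).2 ⟨h5, .refl⟩⟩

theorem post_right {Xs : Set Qs} (Xe : Set Qe) (hc : s.Clo Xs) {l : Lab} (h1 : l ∉ s.L)
    (h2 : l ∈ e.L) :
    (par s e).post (Xs ×ˢ Xe) (.lab l) = Xs ×ˢ e.post Xe (.lab l) := by
  ext ⟨a, b⟩
  constructor
  · rintro ⟨⟨a1, b1⟩, ⟨ha, hb⟩, ⟨a2, b2⟩, hT, hE⟩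
    rw [par_eps] at hE
    rcases hT with ⟨h, _, _⟩ | ⟨_, _, h3, h4⟩ | ⟨h, _, _, _⟩
    · exact absurd h h1
    · obtain rfl : a2 = a1 := h4
      exact ⟨hc _ ha _ hE.1, ⟨b1, hb, b2, h3, hE.2⟩⟩
    · exact absurd h h1
  · rintro ⟨ha, ⟨b1, hb, b2, h3, h5⟩⟩
    exact ⟨(a, b1), ⟨ha, hb⟩, (a, b2), Or.inr (Or.inl ⟨h2, h1, h3, rfl⟩),
      (par_eps s e _ _).2 ⟨.refl, h5⟩⟩

theorem stable_step {Q Lab : Type} (M : LTS Q Lab) {q : Q} (hq : ∀ q', ¬ M.T q none q') {l : Lab}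
    (h : (M.post (M.ec q) (.lab l)).Nonempty) : ∃ q', M.T q (some l) q' := by
  obtain ⟨_, a, ha, b, hb, _⟩ := h
  rcases Relation.ReflTransGen.cases_head ha with rfl | ⟨c, hc, _⟩
  · exact ⟨b, hb⟩
  · exact absurd hc (hq c)

theorem post_delta (hcomp : Composable s e) {Xs : Set Qs} {Xe : Set Qe}
    (hA : ∀ l, .lab l ∈ e.outSet Xe → l ∈ s.I → l ∈ s.inSet Xs)
    (hB : ∀ l, .lab l ∈ s.outSet Xs → l ∈ e.I → l ∈ e.inSet Xe) :
    (par s e).post (Xs ×ˢ Xe) .delta = s.post Xs .delta ×ˢ e.post Xe .delta := by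
  have key : ∀ a ∈ Xs, ∀ b ∈ Xe, ((par s e).Quiescent (a, b) ↔ s.Quiescent a ∧ e.Quiescent b) := by
    intro a ha b hb
    constructor
    · rintro ⟨h1, h2⟩
      have ts : ∀ q', ¬ s.T a none q' := fun q' h => h2 (q', b) (Or.inl ⟨h, rfl⟩)
      have te : ∀ q', ¬ e.T b none q' := fun q' h => h2 (a, q') (Or.inr ⟨h, rfl⟩)
      refine ⟨⟨fun x hx q' hT => ?_, ts⟩, ⟨fun x hx q' hT => ?_, te⟩⟩
      · by_cases hxe : x ∈ e.L
        · have hI : x ∈ e.I := by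
            rcases hxe with h | h
            · exact h
            · have : x ∈ s.U ∩ e.U := ⟨hx, h⟩
              rw [hcomp] at this
              exact this.elim
          have := hB x ((s.mem_outSet _ _).2 ⟨a, ha, hx, q', hT⟩) hI
          rw [LTS.mem_inSet] at this
          obtain ⟨b', hb'⟩ := stable_step e te (this b hb).2
          exact h1 x (Or.inl hx) (q', b') (Or.inr (Or.inr ⟨Or.inr hx, hxe, hT, hb'⟩))
        · exact h1 x (Or.inl hx) (q', b) (Or.inl ⟨Or.inr hx, hxe, hT, rfl⟩)
      · by_cases hxe : x ∈ s.L
        · have hI : x ∈ s.I := by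
            rcases hxe with h | h
            · exact h
            · have : x ∈ s.U ∩ e.U := ⟨h, hx⟩
              rw [hcomp] at this
              exact this.elim
          have := hA x ((e.mem_outSet _ _).2 ⟨b, hb, hx, q', hT⟩) hI
          rw [LTS.mem_inSet] at this
          obtain ⟨a', ha'⟩ := stable_step s ts (this a ha).2
          exact h1 x (Or.inr hx) (a', q') (Or.inr (Or.inr ⟨hxe, Or.inr hx, ha', hT⟩))
        · exact h1 x (Or.inr hx) (a, q') (Or.inr (Or.inl ⟨Or.inr hx, hxe, hT, rfl⟩))
    · rintro ⟨⟨h1, h2⟩, ⟨h3, h4⟩⟩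
      refine ⟨?_, ?_⟩
      · rintro x (hx | hx) q' (⟨k1, k2, k3, k4⟩ | ⟨k1, k2, k3, k4⟩ | ⟨k1, k2, k3, k4⟩)
        · exact h1 x hx _ k3
        · exact k2 (Or.inr hx)
        · exact h1 x hx _ k3
        · exact k2 (Or.inr hx)
        · exact h3 x hx _ k3
        · exact h3 x hx _ k4
      · rintro q' (⟨h, _⟩ | ⟨h, _⟩)
        · exact h2 _ h
        · exact h4 _ h
  ext ⟨a, b⟩
  constructor
  · rintro ⟨⟨a1, b1⟩, ⟨ha, hb⟩, ⟨a2, b2⟩, ⟨h, hT⟩, hE⟩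
    rw [par_eps] at hE
    rw [key a1 ha b1 hb] at hT
    cases h
    exact ⟨⟨a1, ha, a1, ⟨rfl, hT.1⟩, hE.1⟩, ⟨b1, hb, b1, ⟨rfl, hT.2⟩, hE.2⟩⟩
  · rintro ⟨⟨a1, ha, a2, ⟨rfl, h3⟩, h5⟩, ⟨b1, hb, b2, ⟨rfl, h4⟩, h6⟩⟩
    exact ⟨(a2, b2), ⟨ha, hb⟩, (a2, b2), ⟨rfl, (key _ ha _ hb).2 ⟨h3, h4⟩⟩,
      (par_eps s e _ _).2 ⟨h5, h6⟩⟩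

structure Good (R : Set (Set Qs × Set Qe)) (Xs : Set Qs) (Xe : Set Qe) : Prop where
  r : (Xs, Xe) ∈ R
  ns : Xs.Nonempty
  ne : Xe.Nonempty
  cs : s.Clo Xs
  ce : e.Clo Xe

theorem nonempty_ec_of {Q Lab : Type} (M : LTS Q Lab) {X : Set Q} {l : Lab}
    (h : l ∈ M.inSet X) {q : Q} (hq : q ∈ X) : (M.post (M.ec q) (.lab l)).Nonempty :=
  ((M.mem_inSet _ _).1 h q hq).2

theorem fwd (hs : s.WellFormed) (he : e.WellFormed) (hcomp : Composable s e)
    {R : Set (Set Qs × Set Qe)} (hR : IsEcosim s e R) {Xs : Set Qs} {Xe : Set Qe}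
    (h : RU s e Xs Xe) :
    Good s e R Xs Xe ∧ ∃ σ ∈ (par s e).Utraces, (par s e).after σ = Xs ×ˢ Xe := by
  have ds : ∀ x, x ∈ s.I → x ∈ s.U → False := fun x h1 h2 => Set.disjoint_left.1 hs.2.2.1 h1 h2
  have de : ∀ x, x ∈ e.I → x ∈ e.U → False := fun x h1 h2 => Set.disjoint_left.1 he.2.2.1 h1 h2
  have dse : ∀ x, x ∈ s.U → x ∈ e.U → False := fun x h1 h2 => by
    have : x ∈ s.U ∩ e.U := ⟨h1, h2⟩
    rw [hcomp] at this
    exact this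
  induction h with
  | base =>
    refine ⟨⟨hR.1, ?_, ?_, ?_, ?_⟩, [], ⟨?_, ?_, ?_⟩, ?_⟩
    · rw [LTS.after_nil]; exact ⟨_, s.mem_ec _⟩
    · rw [LTS.after_nil]; exact ⟨_, e.mem_ec _⟩
    · rw [LTS.after_nil]; exact s.clo_ec _
    · rw [LTS.after_nil]; exact e.clo_ec _
    · intro x hx; simp at hx
    · exact ⟨_, .nil .refl⟩
    · intro σ1 l σ2 h; simp at h
    · simp only [LTS.after_nil, par_ec]; rfl
  | @syncOutE Xs Xe l _ ho hi ih =>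
    obtain ⟨g, σ, hσ, hp⟩ := ih
    obtain ⟨hin, hr⟩ := (hR.2 _ _ g.r).1 l ho hi
    have hU : l ∈ e.U := by obtain ⟨_, _, h, _⟩ := (e.mem_outSet _ _).1 ho; exact h
    rw [s.afterSet_eq g.cs, e.afterSet_eq g.ce] at *
    have n1 := (s.in_post g.cs g.ns hin).2
    have n2 := (e.mem_outSet_iff _ hU).1 ho
    have hpost := post_sync s e Xs Xe (l := l) (Or.inl hi) (Or.inr hU)
    refine ⟨⟨hr, n1, n2, s.clo_post _ _, e.clo_post _ _⟩, σ ++ [.lab l], ?_, ?_⟩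
    · rw [LTS.utraces_snoc, hp, hpost]
      refine ⟨hσ, Or.inr (Or.inr hU), n1.prod n2, ?_⟩
      rintro l' h (⟨h1, h2⟩ | ⟨h1, h2⟩) <;> cases h
      · exact absurd hU h2
      · exact (de _ h1 hU).elim
    · rw [LTS.after_snoc, hp, hpost]
  | @syncOutS Xs Xe l _ ho hi ih =>
    obtain ⟨g, σ, hσ, hp⟩ := ih
    obtain ⟨hin, hr⟩ := (hR.2 _ _ g.r).2.1 l ho hi
    have hU : l ∈ s.U := by obtain ⟨_, _, h, _⟩ := (s.mem_outSet _ _).1 ho; exact h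
    rw [s.afterSet_eq g.cs, e.afterSet_eq g.ce] at *
    have n1 := (e.in_post g.ce g.ne hin).2
    have n2 := (s.mem_outSet_iff _ hU).1 ho
    have hpost := post_sync s e Xs Xe (l := l) (Or.inr hU) (Or.inl hi)
    refine ⟨⟨hr, n2, n1, s.clo_post _ _, e.clo_post _ _⟩, σ ++ [.lab l], ?_, ?_⟩
    · rw [LTS.utraces_snoc, hp, hpost]
      refine ⟨hσ, Or.inr (Or.inl hU), n2.prod n1, ?_⟩
      rintro l' h (⟨h1, h2⟩ | ⟨h1, h2⟩) <;> cases h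
      · exact (ds _ h1 hU).elim
      · exact absurd hU h2
    · rw [LTS.after_snoc, hp, hpost]
  | @internalE Xs Xe l _ ho hi ih =>
    obtain ⟨g, σ, hσ, hp⟩ := ih
    have hr := (hR.2 _ _ g.r).2.2.1 l ho hi
    rw [e.afterSet_eq g.ce] at *
    have hL : l ∈ e.L ∧ (e.post Xe (.lab l)).Nonempty := by
      rcases ho with ho | ho
      · have hU : l ∈ e.U := by obtain ⟨_, _, h, _⟩ := (e.mem_outSet _ _).1 ho; exact h
        exact ⟨Or.inr hU, (e.mem_outSet_iff _ hU).1 ho⟩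
      · have := e.in_post g.ce g.ne ho
        exact ⟨Or.inl this.1, this.2⟩
    have hpost := post_right s e Xe g.cs hi hL.1
    refine ⟨⟨hr, g.ns, hL.2, g.cs, e.clo_post _ _⟩, σ ++ [.lab l], ?_, ?_⟩
    · rw [LTS.utraces_snoc, hp, hpost]
      refine ⟨hσ, ?_, g.ns.prod hL.2, ?_⟩
      · rcases hL.1 with h | h
        · exact Or.inl (Or.inr ⟨h, fun h' => hi (Or.inr h')⟩)
        · exact Or.inr (Or.inr h)
      rintro l' h (⟨h1, h2⟩ | ⟨h1, h2⟩) <;> cases h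
      · exact absurd (Or.inl h1) hi
      · rintro ⟨a, b⟩ ⟨ha, hb⟩
        rcases ho with ho | ho
        · obtain ⟨_, _, h, _⟩ := (e.mem_outSet _ _).1 ho
          exact (de _ h1 h).elim
        · rw [par_ec, post_right s e _ (s.clo_ec _) hi hL.1]
          exact Set.Nonempty.prod ⟨_, s.mem_ec _⟩ (nonempty_ec_of e ho hb)
    · rw [LTS.after_snoc, hp, hpost]
  | @internalS Xs Xe l _ ho hi ih =>
    obtain ⟨g, σ, hσ, hp⟩ := ih
    have hr := (hR.2 _ _ g.r).2.2.2.1 l ho hi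
    rw [s.afterSet_eq g.cs] at *
    have hL : l ∈ s.L ∧ (s.post Xs (.lab l)).Nonempty := by
      rcases ho with ho | ho
      · have hU : l ∈ s.U := by obtain ⟨_, _, h, _⟩ := (s.mem_outSet _ _).1 ho; exact h
        exact ⟨Or.inr hU, (s.mem_outSet_iff _ hU).1 ho⟩
      · have := s.in_post g.cs g.ns ho
        exact ⟨Or.inl this.1, this.2⟩
    have hpost := post_left s e Xs g.ce hL.1 hi
    refine ⟨⟨hr, hL.2, g.ne, s.clo_post _ _, g.ce⟩, σ ++ [.lab l], ?_, ?_⟩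
    · rw [LTS.utraces_snoc, hp, hpost]
      refine ⟨hσ, ?_, hL.2.prod g.ne, ?_⟩
      · rcases hL.1 with h | h
        · exact Or.inl (Or.inl ⟨h, fun h' => hi (Or.inr h')⟩)
        · exact Or.inr (Or.inl h)
      rintro l' h (⟨h1, h2⟩ | ⟨h1, h2⟩) <;> cases h
      · rintro ⟨a, b⟩ ⟨ha, hb⟩
        rcases ho with ho | ho
        · obtain ⟨_, _, h, _⟩ := (s.mem_outSet _ _).1 ho
          exact (ds _ h1 h).elim
        · rw [par_ec, post_left s e _ (e.clo_ec _) hL.1 hi]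
          exact Set.Nonempty.prod (nonempty_ec_of s ho ha) ⟨_, e.mem_ec _⟩
      · exact absurd (Or.inl h1) hi
    · rw [LTS.after_snoc, hp, hpost]
  | @syncIn Xs Xe l _ ho hi ih =>
    obtain ⟨g, σ, hσ, hp⟩ := ih
    have hr := (hR.2 _ _ g.r).2.2.2.2.1 l ho hi
    rw [s.afterSet_eq g.cs, e.afterSet_eq g.ce] at *
    have n1 := s.in_post g.cs g.ns ho
    have n2 := e.in_post g.ce g.ne hi
    have hpost := post_sync s e Xs Xe (l := l) (Or.inl n1.1) (Or.inl n2.1)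
    refine ⟨⟨hr, n1.2, n2.2, s.clo_post _ _, e.clo_post _ _⟩, σ ++ [.lab l], ?_, ?_⟩
    · rw [LTS.utraces_snoc, hp, hpost]
      refine ⟨hσ, Or.inl (Or.inl ⟨n1.1, fun h => de _ n2.1 h⟩), n1.2.prod n2.2, ?_⟩
      rintro l' h _ ⟨a, b⟩ ⟨ha, hb⟩
      rw [par_ec, post_sync s e _ _ (Or.inl n1.1) (Or.inl n2.1)]
      exact (nonempty_ec_of s ho ha).prod (nonempty_ec_of e hi hb)
    · rw [LTS.after_snoc, hp, hpost]
  | @qdelta Xs Xe _ ho hi ih =>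
    obtain ⟨g, σ, hσ, hp⟩ := ih
    have hr := (hR.2 _ _ g.r).2.2.2.2.2 ho hi
    rw [s.afterSet_eq g.cs, e.afterSet_eq g.ce] at *
    rw [LTS.delta_iff] at ho hi
    have hpost := post_delta s e hcomp (fun l h h' => ((hR.2 _ _ g.r).1 l h h').1)
      (fun l h h' => ((hR.2 _ _ g.r).2.1 l h h').1)
    refine ⟨⟨hr, ho, hi, s.clo_post _ _, e.clo_post _ _⟩, σ ++ [.delta], ?_, ?_⟩
    · rw [LTS.utraces_snoc, hp, hpost]
      refine ⟨hσ, trivial, ho.prod hi, ?_⟩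
      rintro l' h
      cases h
    · rw [LTS.after_snoc, hp, hpost]

theorem bwd (hs : s.WellFormed) (he : e.WellFormed) (hcomp : Composable s e)
    {R : Set (Set Qs × Set Qe)} (hR : IsEcosim s e R) (σ : List (ELabel Lab))
    (hσ : σ ∈ (par s e).Utraces) :
    ∃ Xs Xe, RU s e Xs Xe ∧ (par s e).after σ = Xs ×ˢ Xe := by
  have dse : ∀ x, x ∈ s.U → x ∈ e.U → False := fun x h1 h2 => by
    have : x ∈ s.U ∩ e.U := ⟨h1, h2⟩
    rw [hcomp] at this
    exact this
  induction σ using List.reverseRecOn with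
  | nil =>
    refine ⟨_, _, .base, ?_⟩
    simp only [LTS.after_nil, par_ec]; rfl
  | append_singleton σ x ih =>
    rw [LTS.utraces_snoc] at hσ
    obtain ⟨h1, h2, h3, h4⟩ := hσ
    obtain ⟨Xs, Xe, hRU, hp⟩ := ih h1
    have g := (fwd s e hs he hcomp hR hRU).1
    rw [hp] at h3 h4
    rw [LTS.after_snoc, hp]
    cases x with
    | delta =>
      have hpost := post_delta s e hcomp (fun l h h' => ((hR.2 _ _ g.r).1 l h h').1)
        (fun l h h' => ((hR.2 _ _ g.r).2.1 l h h').1)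
      rw [hpost, Set.prod_nonempty_iff, ← LTS.delta_iff, ← LTS.delta_iff] at h3
      have := RU.qdelta hRU h3.1 h3.2
      rw [s.afterSet_eq g.cs, e.afterSet_eq g.ce] at this
      exact ⟨_, _, this, hpost⟩
    | lab l =>
      by_cases ls : l ∈ s.L <;> by_cases le : l ∈ e.L
      · have hpost := post_sync s e Xs Xe ls le
        refine ⟨_, _, ?_, hpost⟩
        rw [hpost, Set.prod_nonempty_iff] at h3
        rw [← s.afterSet_eq g.cs, ← e.afterSet_eq g.ce]
        by_cases us : l ∈ s.U
        · exact .syncOutS l hRU ((s.mem_outSet_iff _ us).2 h3.1)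
            (le.resolve_right fun h => dse _ us h)
        by_cases ue : l ∈ e.U
        · exact .syncOutE l hRU ((e.mem_outSet_iff _ ue).2 h3.2) (ls.resolve_right us)
        have is := ls.resolve_right us
        have ie := le.resolve_right ue
        have key := h4 l rfl (Or.inl ⟨is, ue⟩)
        have key2 : ∀ a ∈ Xs, ∀ b ∈ Xe, (s.post (s.ec a) (.lab l)).Nonempty ∧
            (e.post (e.ec b) (.lab l)).Nonempty := by
          intro a ha b hb
          have := key (a, b) ⟨ha, hb⟩
          rwa [par_ec, post_sync s e _ _ ls le, Set.prod_nonempty_iff] at this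
        obtain ⟨a0, ha0⟩ := g.ns
        obtain ⟨b0, hb0⟩ := g.ne
        refine .syncIn l hRU ?_ ?_
        · exact (s.mem_inSet _ _).2 fun a ha => ⟨is, (key2 a ha b0 hb0).1⟩
        · exact (e.mem_inSet _ _).2 fun b hb => ⟨ie, (key2 a0 ha0 b hb).2⟩
      · have hpost := post_left s e Xs g.ce ls le
        refine ⟨_, _, ?_, hpost⟩
        rw [hpost, Set.prod_nonempty_iff] at h3
        rw [← s.afterSet_eq g.cs]
        refine .internalS l hRU ?_ le
        by_cases us : l ∈ s.U
        · exact Or.inl ((s.mem_outSet_iff _ us).2 h3.1)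
        have is := ls.resolve_right us
        obtain ⟨b0, hb0⟩ := g.ne
        refine Or.inr ((s.mem_inSet _ _).2 fun a ha => ⟨is, ?_⟩)
        have := h4 l rfl (Or.inl ⟨is, fun h => le (Or.inr h)⟩) (a, b0) ⟨ha, hb0⟩
        rw [par_ec, post_left s e _ (e.clo_ec _) ls le, Set.prod_nonempty_iff] at this
        exact this.1
      · have hpost := post_right s e Xe g.cs ls le
        refine ⟨_, _, ?_, hpost⟩
        rw [hpost, Set.prod_nonempty_iff] at h3
        rw [← e.afterSet_eq g.ce]
        refine .internalE l hRU ?_ ls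
        by_cases ue : l ∈ e.U
        · exact Or.inl ((e.mem_outSet_iff _ ue).2 h3.2)
        have ie := le.resolve_right ue
        obtain ⟨a0, ha0⟩ := g.ns
        refine Or.inr ((e.mem_inSet _ _).2 fun b hb => ⟨ie, ?_⟩)
        have := h4 l rfl (Or.inr ⟨ie, fun h => ls (Or.inr h)⟩) (a0, b) ⟨ha0, hb⟩
        rw [par_ec, post_right s e _ (s.clo_ec _) ls le, Set.prod_nonempty_iff] at this
        exact this.2
      · rcases h2 with (h | h) | (h | h)
        · exact absurd (Or.inl h.1) ls
        · exact absurd (Or.inl h.1) le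
        · exact absurd (Or.inr h) ls
        · exact absurd (Or.inr h) le

theorem collect_prod {Xs : Set Qs} {Xe : Set Qe} (h1 : Xs.Nonempty) (h2 : Xe.Nonempty) :
    collect (Xs ×ˢ Xe) = (Xs, Xe) := by
  simp only [collect, Set.fst_image_prod _ h2, Set.snd_image_prod h1]

end


/-- for composable `s`, `e` with `s eco e`:
`(X_s, X_e) ∈ R_U(s,e)` iff `⟨s ∥ e after σ⟩ = (X_s, X_e)` for some utrace
`σ` of `s ∥ e`. -/
theorem RU_iff_collect_utraces {Qs Qe Lab : Type}
    (s : LTS Qs Lab) (e : LTS Qe Lab)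
    (hs : s.WellFormed) (he : e.WellFormed)
    (hcomp : Composable s e) (heco : Eco s e)
    (Xs : Set Qs) (Xe : Set Qe) :
    RU s e Xs Xe ↔
      ∃ σ ∈ (par s e).Utraces, collect ((par s e).after σ) = (Xs, Xe) := by

  obtain ⟨R, hR⟩ := heco
  constructor
  · intro h
    obtain ⟨g, σ, hσ, hp⟩ := fwd s e hs he hcomp hR h
    exact ⟨σ, hσ, by rw [hp, collect_prod g.ns g.ne]⟩
  · rintro ⟨σ, hσ, hc⟩
    obtain ⟨Ys, Ye, hRU, hp⟩ := bwd s e hs he hcomp hR σ hσ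
    have g := (fwd s e hs he hcomp hR hRU).1
    rw [hp, collect_prod g.ns g.ne] at hc
    cases hc
    exact hRU
end

section
/- Let s and e be composable labelled transition systems and let i_s, i_e be input-enabled transition systems with I_{i_s} = I_s, U_{i_s} = U_s, I_{i_e} = I_e and U_{i_e} = U_e. If i_s mutually accepts e, i_e mutually accepts s, i_s uioco s, and i_e uioco e, then i_s ∥ i_e uioco s ∥ e. -/
namespace TEU

open LTS

theorem W_snoc_iff {Q Lab : Type} {M : LTS Q Lab} {q q' : Q} {σ : List (ELabel Lab)}
    {x : ELabel Lab} : M.W q (σ ++ [x]) q' ↔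
      ∃ q1 q2, M.W q σ q1 ∧ M.VStep q1 x q2 ∧ M.Eps q2 q' := by
  constructor
  · intro h
    generalize hτ : σ ++ [x] = τ at h
    cases h with
    | nil h => simp at hτ
    | snoc h1 h2 h3 =>
      obtain ⟨h, h'⟩ := List.append_inj' hτ rfl
      simp only [List.cons.injEq, and_true] at h'
      subst h; subst h'
      exact ⟨_, _, h1, h2, h3⟩
  · rintro ⟨q1, q2, h1, h2, h3⟩
    exact W.snoc h1 h2 h3

theorem W_nil_iff {Q Lab : Type} {M : LTS Q Lab} {q q' : Q} :
    M.W q [] q' ↔ M.Eps q q' := by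
  constructor
  · intro h
    generalize hτ : ([] : List (ELabel Lab)) = τ at h
    cases h with
    | nil h => exact h
    | snoc h1 h2 h3 => simp at hτ
  · exact W.nil

theorem W_one_iff {Q Lab : Type} {M : LTS Q Lab} {q q' : Q}
    {x : ELabel Lab} : M.W q [x] q' ↔
      ∃ q1 q2, M.Eps q q1 ∧ M.VStep q1 x q2 ∧ M.Eps q2 q' := by
  have := W_snoc_iff (M := M) (q := q) (q' := q') (σ := []) (x := x)
  simpa only [List.nil_append, W_nil_iff] using this

theorem W_eps {Q Lab : Type} {M : LTS Q Lab} {q q1 q' : Q} {σ : List (ELabel Lab)}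
    (h : M.W q σ q1) (h' : M.Eps q1 q') : M.W q σ q' := by
  cases h with
  | nil h => exact W.nil (Relation.ReflTransGen.trans h h')
  | snoc h1 h2 h3 => exact W.snoc h1 h2 (Relation.ReflTransGen.trans h3 h')

theorem W_comp {Q Lab : Type} {M : LTS Q Lab} {q q1 q' : Q} {σ : List (ELabel Lab)}
    {x : ELabel Lab} (h : M.W q σ q1) (h' : M.W q1 [x] q') : M.W q (σ ++ [x]) q' := by
  obtain ⟨a, b, h1, h2, h3⟩ := W_one_iff.1 h'
  exact W.snoc (W_eps h h1) h2 h3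

theorem ut_ext {Q Lab : Type} {M : LTS Q Lab} {σ : List (ELabel Lab)} {x : ELabel Lab}
    (h : σ ∈ M.Utraces) (hx : ELabel.inL M.L x)
    (hin : ∀ ℓ, x = ELabel.lab ℓ → ℓ ∈ M.I → ∀ q, M.W M.q0 σ q →
      ∃ q', M.W q [ELabel.lab ℓ] q')
    (hex : ∃ q', M.W M.q0 (σ ++ [x]) q') : σ ++ [x] ∈ M.Utraces := by
  obtain ⟨h1, h2, h3⟩ := h
  refine ⟨?_, hex, ?_⟩
  · intro y hy
    rcases List.mem_append.1 hy with hy | hy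
    · exact h1 y hy
    · rw [List.mem_singleton.1 hy]; exact hx
  · intro σ1 ℓ σ2 heq hI q hq
    rcases List.eq_nil_or_concat σ2 with rfl | ⟨σ3, y, rfl⟩
    · obtain ⟨a, b⟩ := List.append_inj' heq rfl
      simp only [List.cons.injEq, and_true] at b
      subst a
      exact hin ℓ b hI q hq
    · have heq' : σ ++ [x] = (σ1 ++ ELabel.lab ℓ :: σ3) ++ [y] := by simp [heq]
      obtain ⟨a, b⟩ := List.append_inj' heq' rfl
      exact h3 σ1 ℓ σ3 a hI q hq

theorem ut_pre {Q Lab : Type} {M : LTS Q Lab} {σ τ : List (ELabel Lab)}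
    (h : σ ++ τ ∈ M.Utraces) : σ ∈ M.Utraces := by
  induction τ using List.reverseRecOn with
  | nil => simpa using h
  | append_singleton τ x ih =>
    apply ih
    obtain ⟨h1, ⟨q', h2⟩, h3⟩ := h
    rw [← List.append_assoc] at h1 h2 h3
    obtain ⟨q1, q2, ha, -, -⟩ := W_snoc_iff.1 h2
    refine ⟨fun y hy => h1 y (List.mem_append_left _ hy), ⟨_, ha⟩, ?_⟩
    intro σ1 ℓ σ2 heq
    exact h3 σ1 ℓ (σ2 ++ [x]) (by simp [heq])

theorem ut_in {Q Lab : Type} {M : LTS Q Lab} {σ : List (ELabel Lab)} {ℓ : Lab}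
    (h : σ ++ [ELabel.lab ℓ] ∈ M.Utraces) (hI : ℓ ∈ M.I) {q : Q} (hq : M.W M.q0 σ q) :
    ∃ q', M.W q [ELabel.lab ℓ] q' :=
  h.2.2 σ ℓ [] rfl hI q hq

theorem projD_snoc_in {Lab : Type} {σ : List (ELabel Lab)} {x : ELabel Lab} {A : Set Lab}
    (h : ELabel.inL A x) : projD (σ ++ [x]) A = projD σ A ++ [x] := by
  simp [projD, List.filter_append, h]

theorem projD_snoc_out {Lab : Type} {σ : List (ELabel Lab)} {x : ELabel Lab} {A : Set Lab}
    (h : ¬ ELabel.inL A x) : projD (σ ++ [x]) A = projD σ A := by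
  simp [projD, List.filter_append, h]

section
variable {Qm Qn Lab : Type} {M : LTS Qm Lab} {N : LTS Qn Lab}

theorem par_L : (par M N).L = M.L ∪ N.L := by
  ext x
  simp only [LTS.L, par, Set.mem_union, Set.mem_sdiff]
  tauto

theorem eps_up {m m' : Qm} {n n' : Qn} (h1 : M.Eps m m') (h2 : N.Eps n n') :
    (par M N).Eps (m, n) (m', n') := by
  have a : (par M N).Eps (m, n) (m', n) := by
    induction h1 with
    | refl => exact Relation.ReflTransGen.refl
    | tail _ h ih => exact Relation.ReflTransGen.tail ih (Or.inl ⟨h, rfl⟩)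
  have b : (par M N).Eps (m', n) (m', n') := by
    induction h2 with
    | refl => exact Relation.ReflTransGen.refl
    | tail _ h ih => exact Relation.ReflTransGen.tail ih (Or.inr ⟨h, rfl⟩)
  exact Relation.ReflTransGen.trans a b

theorem eps_down {p p' : Qm × Qn} (h : (par M N).Eps p p') :
    M.Eps p.1 p'.1 ∧ N.Eps p.2 p'.2 := by
  induction h with
  | refl => exact ⟨Relation.ReflTransGen.refl, Relation.ReflTransGen.refl⟩
  | tail _ h ih =>
    rcases h with ⟨h, h'⟩ | ⟨h, h'⟩
    · exact ⟨Relation.ReflTransGen.tail ih.1 h, h' ▸ ih.2⟩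
    · exact ⟨h' ▸ ih.1, Relation.ReflTransGen.tail ih.2 h⟩

theorem quies_up {m : Qm} {n : Qn} (h1 : M.Quiescent m) (h2 : N.Quiescent n) :
    (par M N).Quiescent (m, n) := by
  constructor
  · rintro x hx ⟨m', n'⟩ h
    have hx : x ∈ M.U ∨ x ∈ N.U := hx
    rcases h with ⟨a, b, c, d⟩ | ⟨a, b, c, d⟩ | ⟨a, b, c, d⟩
    · rcases hx with hx | hx
      · exact h1.1 x hx _ c
      · exact b (Or.inr hx)
    · rcases hx with hx | hx
      · exact b (Or.inr hx)
      · exact h2.1 x hx _ c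
    · rcases hx with hx | hx
      · exact h1.1 x hx _ c
      · exact h2.1 x hx _ d
  · rintro ⟨m', n'⟩ (⟨h, -⟩ | ⟨h, -⟩)
    · exact h1.2 _ h
    · exact h2.2 _ h

theorem W_stable {Q : Type} {M : LTS Q Lab} {q q' : Q} {ℓ : Lab}
    (h : M.W q [ELabel.lab ℓ] q') (hs : ∀ q', ¬ M.T q none q') :
    ∃ q', M.T q (some ℓ) q' := by
  obtain ⟨q1, q2, h1, h2, -⟩ := W_one_iff.1 h
  rcases Relation.ReflTransGen.cases_head h1 with rfl | ⟨c, hc, -⟩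
  · exact ⟨_, h2⟩
  · exact absurd hc (hs c)

theorem quies_down (hU : M.U ∩ N.U = ∅) {m : Qm} {n : Qn}
    (hMN : ∀ ℓ ∈ M.U, ℓ ∈ N.I → (∃ m', M.T m (some ℓ) m') → ∃ n', N.W n [ELabel.lab ℓ] n')
    (hNM : ∀ ℓ ∈ N.U, ℓ ∈ M.I → (∃ n', N.T n (some ℓ) n') → ∃ m', M.W m [ELabel.lab ℓ] m')
    (h : (par M N).Quiescent (m, n)) : M.Quiescent m ∧ N.Quiescent n := by
  have hm : ∀ m', ¬ M.T m none m' := fun m' hm => h.2 (m', n) (Or.inl ⟨hm, rfl⟩)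
  have hn : ∀ n', ¬ N.T n none n' := fun n' hn => h.2 (m, n') (Or.inr ⟨hn, rfl⟩)
  refine ⟨⟨?_, hm⟩, ⟨?_, hn⟩⟩
  · intro x hx m' hT
    by_cases hL : x ∈ N.L
    · rcases hL with hI | hI
      · obtain ⟨_, hw⟩ := hMN x hx hI ⟨_, hT⟩
        obtain ⟨n', hn'⟩ := W_stable hw hn
        exact h.1 x (Or.inl hx) (m', n') (Or.inr (Or.inr ⟨Or.inr hx, Or.inl hI, hT, hn'⟩))
      · exact (Set.eq_empty_iff_forall_notMem.1 hU) x ⟨hx, hI⟩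
    · exact h.1 x (Or.inl hx) (m', n) (Or.inl ⟨Or.inr hx, hL, hT, rfl⟩)
  · intro x hx n' hT
    by_cases hL : x ∈ M.L
    · rcases hL with hI | hI
      · obtain ⟨_, hw⟩ := hNM x hx hI ⟨_, hT⟩
        obtain ⟨m', hm'⟩ := W_stable hw hm
        exact h.1 x (Or.inr hx) (m', n') (Or.inr (Or.inr ⟨Or.inl hI, Or.inr hx, hm', hT⟩))
      · exact (Set.eq_empty_iff_forall_notMem.1 hU) x ⟨hI, hx⟩
    · exact h.1 x (Or.inr hx) (m, n') (Or.inr (Or.inl ⟨Or.inr hx, hL, hT, rfl⟩))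

theorem traceIn_snoc {A : Set Lab} {σ : List (ELabel Lab)} {x : ELabel Lab}
    (h : TraceIn A (σ ++ [x])) : TraceIn A σ ∧ ELabel.inL A x :=
  ⟨fun y hy => h y (List.mem_append_left _ hy), h x (by simp)⟩

theorem up {m m' : Qm} {n n' : Qn} {σ : List (ELabel Lab)} (ht : TraceIn (M.L ∪ N.L) σ)
    (h1 : M.W m (projD σ M.L) m') (h2 : N.W n (projD σ N.L) n') :
    (par M N).W (m, n) σ (m', n') := by
  induction σ using List.reverseRecOn generalizing m' n' with
  | nil => exact W.nil (eps_up (W_nil_iff.1 h1) (W_nil_iff.1 h2))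
  | append_singleton σ x ih =>
    obtain ⟨ht, hx⟩ := traceIn_snoc ht
    by_cases hM : ELabel.inL M.L x
    · rw [projD_snoc_in hM] at h1
      obtain ⟨m1, m2, a1, a2, a3⟩ := W_snoc_iff.1 h1
      by_cases hN : ELabel.inL N.L x
      · rw [projD_snoc_in hN] at h2
        obtain ⟨n1, n2, b1, b2, b3⟩ := W_snoc_iff.1 h2
        refine W.snoc (q2 := (m2, n2)) (ih ht a1 b1) ?_ (eps_up a3 b3)
        cases x with
        | lab ℓ => exact Or.inr (Or.inr ⟨hM, hN, a2, b2⟩)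
        | delta =>
          obtain ⟨rfl, a2⟩ := a2
          obtain ⟨rfl, b2⟩ := b2
          exact ⟨rfl, quies_up a2 b2⟩
      · rw [projD_snoc_out hN] at h2
        refine W.snoc (q2 := (m2, n')) (ih ht a1 h2) ?_ (eps_up a3 Relation.ReflTransGen.refl)
        cases x with
        | lab ℓ => exact Or.inl ⟨hM, hN, a2, rfl⟩
        | delta => exact absurd trivial hN
    · rw [projD_snoc_out hM] at h1
      by_cases hN : ELabel.inL N.L x
      · rw [projD_snoc_in hN] at h2
        obtain ⟨n1, n2, b1, b2, b3⟩ := W_snoc_iff.1 h2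
        refine W.snoc (q2 := (m', n2)) (ih ht h1 b1) ?_ (eps_up Relation.ReflTransGen.refl b3)
        cases x with
        | lab ℓ => exact Or.inr (Or.inl ⟨hN, hM, b2, rfl⟩)
        | delta => exact absurd trivial hM
      · cases x with
        | lab ℓ => exact absurd hx (by rintro (h | h); exacts [hM h, hN h])
        | delta => exact absurd trivial hM

theorem down {m m' : Qm} {n n' : Qn} {σ : List (ELabel Lab)}
    (H : ∀ σ1 σ2, σ = σ1 ++ ELabel.delta :: σ2 → ∀ m1 n1, (par M N).W (m, n) σ1 (m1, n1) →
      (par M N).Quiescent (m1, n1) → M.Quiescent m1 ∧ N.Quiescent n1)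
    (h : (par M N).W (m, n) σ (m', n')) :
    M.W m (projD σ M.L) m' ∧ N.W n (projD σ N.L) n' := by
  induction σ using List.reverseRecOn generalizing m' n' with
  | nil =>
    obtain ⟨a, b⟩ := eps_down (W_nil_iff.1 h)
    exact ⟨W.nil a, W.nil b⟩
  | append_singleton σ x ih =>
    obtain ⟨⟨m1, n1⟩, ⟨m2, n2⟩, h1, h2, h3⟩ := W_snoc_iff.1 h
    obtain ⟨a, b⟩ := ih (fun σ1 σ2 heq => H σ1 (σ2 ++ [x]) (by simp [heq])) h1
    obtain ⟨c, d⟩ := eps_down h3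
    cases x with
    | lab ℓ =>
      rcases h2 with ⟨hM, hN, h2, h2'⟩ | ⟨hN, hM, h2, h2'⟩ | ⟨hM, hN, h2, h2'⟩
      · rw [projD_snoc_in (x := ELabel.lab ℓ) (A := M.L) hM,
          projD_snoc_out (x := ELabel.lab ℓ) (A := N.L) hN]
        have h2' : n2 = n1 := h2'
        subst h2'
        exact ⟨W.snoc a h2 c, W_eps b d⟩
      · rw [projD_snoc_out (x := ELabel.lab ℓ) (A := M.L) hM,
          projD_snoc_in (x := ELabel.lab ℓ) (A := N.L) hN]
        have h2' : m2 = m1 := h2'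
        subst h2'
        exact ⟨W_eps a c, W.snoc b h2 d⟩
      · rw [projD_snoc_in (x := ELabel.lab ℓ) (A := M.L) hM,
          projD_snoc_in (x := ELabel.lab ℓ) (A := N.L) hN]
        exact ⟨W.snoc a h2 c, W.snoc b h2' d⟩
    | delta =>
      obtain ⟨heq, hq⟩ := h2
      obtain ⟨rfl, rfl⟩ := Prod.mk.inj heq
      obtain ⟨q1, q2⟩ := H σ [] rfl _ _ h1 hq
      rw [projD_snoc_in (x := ELabel.delta) (A := M.L) trivial,
        projD_snoc_in (x := ELabel.delta) (A := N.L) trivial]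
      exact ⟨W.snoc a ⟨rfl, q1⟩ c, W.snoc b ⟨rfl, q2⟩ d⟩

theorem one_up {m : Qm} {n : Qn} {ℓ : Lab} (hL : ℓ ∈ M.L ∪ N.L)
    (h1 : ℓ ∈ M.L → ∃ m', M.W m [ELabel.lab ℓ] m')
    (h2 : ℓ ∈ N.L → ∃ n', N.W n [ELabel.lab ℓ] n') :
    ∃ p, (par M N).W (m, n) [ELabel.lab ℓ] p := by
  have key : ∀ {Q : Type} (K : LTS Q Lab) (k : Q),
      (ℓ ∈ K.L → ∃ k', K.W k [ELabel.lab ℓ] k') →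
      ∃ k', K.W k (projD [ELabel.lab ℓ] K.L) k' := by
    intro Q K k h
    by_cases hk : ℓ ∈ K.L
    · have := projD_snoc_in (σ := []) (x := ELabel.lab ℓ) (A := K.L) hk
      simp only [List.nil_append] at this
      rw [this]; exact h hk
    · have := projD_snoc_out (σ := []) (x := ELabel.lab ℓ) (A := K.L) hk
      simp only [List.nil_append] at this
      rw [this]; exact ⟨k, W.nil Relation.ReflTransGen.refl⟩
  obtain ⟨m', hm⟩ := key M m h1
  obtain ⟨n', hn⟩ := key N n h2
  refine ⟨(m', n'), up ?_ hm hn⟩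
  intro y hy
  rw [List.mem_singleton.1 hy]; exact hL

theorem one_down {m : Qm} {n : Qn} {ℓ : Lab} {p : Qm × Qn}
    (h : (par M N).W (m, n) [ELabel.lab ℓ] p) :
    (ℓ ∈ M.L → ∃ m', M.W m [ELabel.lab ℓ] m') ∧
    (ℓ ∈ N.L → ∃ n', N.W n [ELabel.lab ℓ] n') := by
  obtain ⟨h1, h2⟩ := down (m' := p.1) (n' := p.2) (by
    intro σ1 σ2 heq
    have : ELabel.delta ∈ [ELabel.lab ℓ] := by rw [heq]; simp
    simp at this) h
  constructor
  · intro hk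
    have := projD_snoc_in (σ := []) (x := ELabel.lab ℓ) (A := M.L) hk
    simp only [List.nil_append] at this
    rw [this] at h1; exact ⟨_, h1⟩
  · intro hk
    have := projD_snoc_in (σ := []) (x := ELabel.lab ℓ) (A := N.L) hk
    simp only [List.nil_append] at this
    rw [this] at h2; exact ⟨_, h2⟩

theorem par_in_left (hd : Disjoint M.I M.U) {ℓ : Lab}
    (hI : ℓ ∈ (par M N).I) (hL : ℓ ∈ M.L) : ℓ ∈ M.I := by
  rcases hI with h | h
  · exact h.1
  · rcases hL with h' | h'
    · exact h'
    · exact absurd h' h.2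

theorem par_in_right (hd : Disjoint N.I N.U) {ℓ : Lab}
    (hI : ℓ ∈ (par M N).I) (hL : ℓ ∈ N.L) : ℓ ∈ N.I := by
  rcases hI with h | h
  · rcases hL with h' | h'
    · exact h'
    · exact absurd h' h.2
  · exact h.1

/-- Utraces of a specification with an input-enabled partner. -/
theorem mixed (hU : M.U ∩ N.U = ∅) (hMd : Disjoint M.I M.U) (hNd : Disjoint N.I N.U)
    (hen : N.InputEnabled) (hacc : Accepts M N) {σ : List (ELabel Lab)}
    (ht : TraceIn (M.L ∪ N.L) σ) (h1 : projD σ M.L ∈ M.Utraces)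
    (h2 : ∃ n, N.W N.q0 (projD σ N.L) n) : σ ∈ (par M N).Utraces := by
  induction σ using List.reverseRecOn with
  | nil =>
    refine ⟨fun y hy => by simp at hy, ⟨_, W.nil Relation.ReflTransGen.refl⟩, ?_⟩
    intro σ1 ℓ σ2 heq
    simp at heq
  | append_singleton σ x ih =>
    obtain ⟨n', hn'⟩ := h2
    obtain ⟨m', hm'⟩ := h1.2.1
    have hfull := up ht hm' hn'
    obtain ⟨ht, hx⟩ := traceIn_snoc ht
    have h1' : projD σ M.L ∈ M.Utraces := by
      by_cases h : ELabel.inL M.L x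
      · rw [projD_snoc_in h] at h1; exact ut_pre h1
      · rw [projD_snoc_out h] at h1; exact h1
    have h2' : ∃ n, N.W N.q0 (projD σ N.L) n := by
      by_cases h : ELabel.inL N.L x
      · rw [projD_snoc_in h] at hn'
        obtain ⟨n1, _, hn1, _, _⟩ := W_snoc_iff.1 hn'
        exact ⟨n1, hn1⟩
      · rw [projD_snoc_out h] at hn'; exact ⟨_, hn'⟩
    have hσ := ih ht h1' h2'
    refine ut_ext hσ (by rw [par_L]; exact hx) ?_ ⟨_, hfull⟩
    rintro ℓ rfl hI ⟨m, n⟩ hq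
    obtain ⟨hm, hn⟩ := down (by
      rintro σ1 σ2 heq m1 n1 hw
      have hσ1 : σ1 ∈ (par M N).Utraces := ut_pre (heq ▸ hσ)
      apply quies_down hU
      · intro ℓ hℓ hℓ' _
        exact hen n1 ℓ hℓ'
      · intro ℓ hℓ hℓ' h
        exact (hacc σ1 hσ1 m1 n1 hw ℓ ⟨hℓ, h⟩ hℓ').2) hq
    apply one_up hx
    · intro hL
      rw [projD_snoc_in (x := ELabel.lab ℓ) (A := M.L) hL] at h1
      exact ut_in h1 (par_in_left hMd hI hL) hm
    · intro hL
      exact hen n ℓ (par_in_right hNd hI hL)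

theorem acc_out (hU : M.U ∩ N.U = ∅) (hMd : Disjoint M.I M.U) (hNd : Disjoint N.I N.U)
    (hen : N.InputEnabled) (hacc : Accepts M N) {σ : List (ELabel Lab)}
    (ht : TraceIn (M.L ∪ N.L) σ) (h1 : projD σ M.L ∈ M.Utraces)
    {m : Qm} {n n' : Qn} {ℓ : Lab}
    (hm : M.W M.q0 (projD σ M.L) m) (hn : N.W N.q0 (projD σ N.L) n)
    (hℓ : ℓ ∈ N.U) (hT : N.T n (some ℓ) n') (hI : ℓ ∈ M.I) :
    ∃ m', M.W m [ELabel.lab ℓ] m' :=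
  (hacc σ (mixed hU hMd hNd hen hacc ht h1 ⟨n, hn⟩) m n (up ht hm hn) ℓ ⟨hℓ, n', hT⟩ hI).2

/-- Extending a utrace of a specification along a step of a correct implementation. -/
theorem spec_step (hio : Uioco N M) (hUe : N.U = M.U) {τ : List (ELabel Lab)}
    {x : ELabel Lab} {n n' : Qn}
    (hτ : τ ∈ M.Utraces) (hw : N.W N.q0 τ n) (hv : N.VStep n x n')
    (hx : ELabel.inL M.L x)
    (hin : ∀ ℓ, x = ELabel.lab ℓ → ℓ ∈ M.I → ∀ q, M.W M.q0 τ q →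
      ∃ q', M.W q [ELabel.lab ℓ] q') : τ ++ [x] ∈ M.Utraces := by
  refine ut_ext hτ hx hin ?_
  have key : x ∈ N.outq n → ∃ q ∈ M.after τ, x ∈ M.outq q := by
    intro h
    have h' : x ∈ N.outSet (N.after τ) := Set.mem_biUnion (show n ∈ N.after τ from hw) h
    have := hio τ hτ h'
    simpa only [LTS.outSet, Set.mem_iUnion, exists_prop] using this
  cases x with
  | delta =>
    obtain ⟨q, hq, ho⟩ := key hv.2
    exact ⟨q, W.snoc hq ⟨rfl, ho⟩ Relation.ReflTransGen.refl⟩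
  | lab ℓ =>
    rcases hx with hI | hI
    · obtain ⟨q, hq⟩ := hτ.2.1
      obtain ⟨q', hq'⟩ := hin ℓ rfl hI q hq
      exact ⟨q', W_comp hq hq'⟩
    · obtain ⟨q, hq, -, q', ho⟩ := key ⟨hUe ▸ hI, _, hv⟩
      exact ⟨q', W.snoc hq ho Relation.ReflTransGen.refl⟩

end

theorem out_transfer {Qi Qs Lab : Type} {i : LTS Qi Lab} {s : LTS Qs Lab} (h : Uioco i s)
    {τ : List (ELabel Lab)} (hτ : τ ∈ s.Utraces) {x : ELabel Lab} {p : Qi}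
    (hp : i.W i.q0 τ p) (hx : x ∈ i.outq p) : ∃ q, s.W s.q0 τ q ∧ x ∈ s.outq q := by
  have h' : x ∈ i.outSet (i.after τ) := Set.mem_biUnion (show p ∈ i.after τ from hp) hx
  have := h τ hτ h'
  simp only [LTS.outSet, Set.mem_iUnion, exists_prop] at this
  exact this

end TEU

/-- if `i_s` mutually accepts `e`, `i_e` mutually accepts `s`,
`i_s uioco s` and `i_e uioco e`, then `i_s ∥ i_e uioco s ∥ e`. -/
theorem test_eco_implies_uioco
    {Qs Qe Qis Qie Lab : Type}
    (s : LTS Qs Lab) (e : LTS Qe Lab) (iS : LTS Qis Lab) (iE : LTS Qie Lab)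
    (hs : s.WellFormed) (he : e.WellFormed)
    (hiS : iS.WellFormed) (hiE : iE.WellFormed)
    (hcomp : Composable s e)
    (hiSenabled : iS.InputEnabled) (hiEenabled : iE.InputEnabled)
    (hI1 : iS.I = s.I) (hU1 : iS.U = s.U)
    (hI2 : iE.I = e.I) (hU2 : iE.U = e.U)
    (hma1 : MutuallyAccepts iS e) (hma2 : MutuallyAccepts iE s)
    (huioco1 : Uioco iS s) (huioco2 : Uioco iE e) :
    Uioco (par iS iE) (par s e) := by
  have hLs : iS.L = s.L := by rw [LTS.L, LTS.L, hI1, hU1]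
  have hLe : iE.L = e.L := by rw [LTS.L, LTS.L, hI2, hU2]
  have hsd := hs.2.2.1
  have hed := he.2.2.1
  have hiSd := hiS.2.2.1
  have hiEd := hiE.2.2.1
  have hU : s.U ∩ e.U = ∅ := hcomp
  have hUi : iS.U ∩ iE.U = ∅ := by rw [hU1, hU2]; exact hU
  have hUes : e.U ∩ iS.U = ∅ := by rw [hU1, Set.inter_comm]; exact hU
  have hUse : s.U ∩ iE.U = ∅ := by rw [hU2]; exact hU
  have hquies : ∀ p1 p2, (par iS iE).Quiescent (p1, p2) →
      iS.Quiescent p1 ∧ iE.Quiescent p2 := fun p1 p2 =>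
    TEU.quies_down hUi (fun ℓ _ h _ => hiEenabled _ ℓ h) (fun ℓ _ h _ => hiSenabled _ ℓ h)
  have hdown : ∀ σ p1 p2, (par iS iE).W (iS.q0, iE.q0) σ (p1, p2) →
      iS.W iS.q0 (projD σ s.L) p1 ∧ iE.W iE.q0 (projD σ e.L) p2 := by
    intro σ p1 p2 h
    have := TEU.down (fun _ _ _ m1 n1 _ => hquies m1 n1) h
    rwa [hLs, hLe] at this
  -- outputs of the implementations are accepted by the specifications
  have accE : ∀ σ, TraceIn (s.L ∪ e.L) σ → projD σ e.L ∈ e.Utraces → ∀ p p' q ℓ,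
      iS.W iS.q0 (projD σ s.L) p → e.W e.q0 (projD σ e.L) q → iS.T p (some ℓ) p' →
      ℓ ∈ s.U → ℓ ∈ e.I → ∃ q', e.W q [ELabel.lab ℓ] q' := by
    intro σ ht hut p p' q ℓ hp hq hT hℓ hℓ'
    exact TEU.acc_out hUes hed hiSd hiSenabled hma1.2 (by rwa [hLs, Set.union_comm]) hut hq
      (by rwa [hLs]) (by rwa [hU1]) hT hℓ'
  have accS : ∀ σ, TraceIn (s.L ∪ e.L) σ → projD σ s.L ∈ s.Utraces → ∀ p p' q ℓ,
      iE.W iE.q0 (projD σ e.L) p → s.W s.q0 (projD σ s.L) q → iE.T p (some ℓ) p' →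
      ℓ ∈ e.U → ℓ ∈ s.I → ∃ q', s.W q [ELabel.lab ℓ] q' := by
    intro σ ht hut p p' q ℓ hp hq hT hℓ hℓ'
    exact TEU.acc_out hUse hsd hiEd hiEenabled hma2.2 (by rwa [hLe]) hut hq
      (by rwa [hLe]) (by rwa [hU2]) hT hℓ'
  have main : ∀ σ, σ ∈ (par s e).Utraces → (∃ p, (par iS iE).W (iS.q0, iE.q0) σ p) →
      projD σ s.L ∈ s.Utraces ∧ projD σ e.L ∈ e.Utraces := by
    intro σ
    induction σ using List.reverseRecOn with
    | nil =>
      intro _ _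
      constructor
      · refine ⟨fun y hy => by simp [projD] at hy, ⟨_, LTS.W.nil Relation.ReflTransGen.refl⟩, ?_⟩
        intro σ1 ℓ σ2 heq
        simp [projD] at heq
      · refine ⟨fun y hy => by simp [projD] at hy, ⟨_, LTS.W.nil Relation.ReflTransGen.refl⟩, ?_⟩
        intro σ1 ℓ σ2 heq
        simp [projD] at heq
    | append_singleton σ x ih =>
      rintro hut ⟨p, hp⟩
      obtain ⟨⟨p1, p2⟩, ⟨r1, r2⟩, hw, hv, -⟩ := TEU.W_snoc_iff.1 hp
      obtain ⟨ihs, ihe⟩ := ih (TEU.ut_pre hut) ⟨_, hw⟩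
      obtain ⟨hw1, hw2⟩ := hdown _ _ _ hw
      have ht := hut.1
      rw [TEU.par_L] at ht
      obtain ⟨ht', hx⟩ := TEU.traceIn_snoc ht
      have hv1 : ELabel.inL s.L x → iS.VStep p1 x r1 := by
        intro hL
        cases x with
        | delta =>
          obtain ⟨heq, hq⟩ := hv
          exact ⟨(Prod.mk.inj heq).1, (hquies _ _ hq).1⟩
        | lab ℓ =>
          rcases hv with h | h | h
          · exact h.2.2.1
          · exact absurd (hLs ▸ hL) h.2.1
          · exact h.2.2.1
      have hv2 : ELabel.inL e.L x → iE.VStep p2 x r2 := by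
        intro hL
        cases x with
        | delta =>
          obtain ⟨heq, hq⟩ := hv
          exact ⟨(Prod.mk.inj heq).2, (hquies _ _ hq).2⟩
        | lab ℓ =>
          rcases hv with h | h | h
          · exact absurd (hLe ▸ hL) h.2.1
          · exact h.2.2.1
          · exact h.2.2.2
      constructor
      · by_cases hL : ELabel.inL s.L x
        · rw [TEU.projD_snoc_in hL]
          refine TEU.spec_step huioco1 hU1 ihs hw1 (hv1 hL) hL ?_
          rintro ℓ rfl hI q hq
          by_cases hO : ℓ ∈ e.U
          · exact accS σ ht' ihs p2 r2 q ℓ hw2 hq (hv2 (Or.inr hO)) hO hI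
          · obtain ⟨q2, hq2⟩ := ihe.2.1
            obtain ⟨_, hpp⟩ := TEU.ut_in hut (Or.inl ⟨hI, hO⟩) (TEU.up ht' hq hq2)
            exact (TEU.one_down hpp).1 hL
        · rw [TEU.projD_snoc_out hL]; exact ihs
      · by_cases hL : ELabel.inL e.L x
        · rw [TEU.projD_snoc_in hL]
          refine TEU.spec_step huioco2 hU2 ihe hw2 (hv2 hL) hL ?_
          rintro ℓ rfl hI q hq
          by_cases hO : ℓ ∈ s.U
          · exact accE σ ht' ihe p1 r1 q ℓ hw1 hq (hv1 (Or.inr hO)) hO hI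
          · obtain ⟨q2, hq2⟩ := ihs.2.1
            obtain ⟨_, hpp⟩ := TEU.ut_in hut (Or.inr ⟨hI, hO⟩) (TEU.up ht' hq2 hq)
            exact (TEU.one_down hpp).2 hL
        · rw [TEU.projD_snoc_out hL]; exact ihe
  intro σ hut x hx
  simp only [LTS.outSet, Set.mem_iUnion, exists_prop] at hx ⊢
  obtain ⟨⟨p1, p2⟩, hw, hx⟩ := hx
  have hw : (par iS iE).W (iS.q0, iE.q0) σ (p1, p2) := hw
  obtain ⟨us, ue⟩ := main σ hut ⟨_, hw⟩
  obtain ⟨hw1, hw2⟩ := hdown _ _ _ hw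
  have ht := hut.1
  rw [TEU.par_L] at ht
  cases x with
  | delta =>
    obtain ⟨a, b⟩ := hquies _ _ hx
    obtain ⟨q1, h1, o1⟩ := TEU.out_transfer huioco1 us (x := ELabel.delta) hw1 a
    obtain ⟨q2, h2, o2⟩ := TEU.out_transfer huioco2 ue (x := ELabel.delta) hw2 b
    exact ⟨(q1, q2), TEU.up ht h1 h2, TEU.quies_up o1 o2⟩
  | lab ℓ =>
    obtain ⟨hℓ, ⟨r1, r2⟩, hT⟩ := hx
    have hℓ : ℓ ∈ iS.U ∨ ℓ ∈ iE.U := hℓ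
    rw [hU1, hU2] at hℓ
    rcases hℓ with hℓ | hℓ
    · have hT1 : iS.T p1 (some ℓ) r1 := by
        rcases hT with h | h | h
        · exact h.2.2.1
        · exact absurd (hLs ▸ Or.inr hℓ) h.2.1
        · exact h.2.2.1
      obtain ⟨q1, h1, -, q1', o1⟩ := TEU.out_transfer huioco1 us (x := ELabel.lab ℓ) hw1
        ⟨by rwa [hU1], _, hT1⟩
      obtain ⟨q2, h2⟩ := ue.2.1
      by_cases hL : ℓ ∈ e.L
      · have hI : ℓ ∈ e.I := by
          rcases hL with h | h
          · exact h
          · exact absurd (show ℓ ∈ s.U ∩ e.U from ⟨hℓ, h⟩) (by rw [hU]; simp)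
        obtain ⟨q2', hq⟩ := accE σ ht ue p1 r1 q2 ℓ hw1 h2 hT1 hℓ hI
        obtain ⟨q3, q4, ha, hb, -⟩ := TEU.W_one_iff.1 hq
        exact ⟨(q1, q3), TEU.up ht h1 (TEU.W_eps h2 ha), Or.inl hℓ, (q1', q4),
          Or.inr (Or.inr ⟨Or.inr hℓ, hL, o1, hb⟩)⟩
      · exact ⟨(q1, q2), TEU.up ht h1 h2, Or.inl hℓ, (q1', q2),
          Or.inl ⟨Or.inr hℓ, hL, o1, rfl⟩⟩
    · have hT1 : iE.T p2 (some ℓ) r2 := by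
        rcases hT with h | h | h
        · exact absurd (hLe ▸ Or.inr hℓ) h.2.1
        · exact h.2.2.1
        · exact h.2.2.2
      obtain ⟨q2, h2, -, q2', o2⟩ := TEU.out_transfer huioco2 ue (x := ELabel.lab ℓ) hw2
        ⟨by rwa [hU2], _, hT1⟩
      obtain ⟨q1, h1⟩ := us.2.1
      by_cases hL : ℓ ∈ s.L
      · have hI : ℓ ∈ s.I := by
          rcases hL with h | h
          · exact h
          · exact absurd (show ℓ ∈ s.U ∩ e.U from ⟨h, hℓ⟩) (by rw [hU]; simp)
        obtain ⟨q1', hq⟩ := accS σ ht us p2 r2 q1 ℓ hw2 h1 hT1 hℓ hI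
        obtain ⟨q3, q4, ha, hb, -⟩ := TEU.W_one_iff.1 hq
        exact ⟨(q3, q2), TEU.up ht (TEU.W_eps h1 ha) h2, Or.inr hℓ, (q4, q2'),
          Or.inr (Or.inr ⟨hL, Or.inr hℓ, hb, o2⟩)⟩
      · exact ⟨(q1, q2), TEU.up ht h1 h2, Or.inr hℓ, (q1, q2'),
          Or.inr (Or.inl ⟨Or.inr hℓ, hL, o2, rfl⟩)⟩
end

section
/- Let s and e be composable labelled transition systems, let q_s, q_s' ∈ Q_s, q_e, q_e' ∈ Q_e, and let σ ∈ (L_{s∥e}^δ)*. If q_s mutually accepts q_e over σ, then q_s ∥ q_e ==σ==> q_s' ∥ q_e' if and only if q_s ==σ↾L_s^δ==> q_s' and q_e ==σ↾L_e^δ==> q_e'. -/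
theorem rtg_lift {A B : Type} {r : A → A → Prop} {p : B → B → Prop} {a b : A} (f : A → B)
    (h : ∀ a b, r a b → p (f a) (f b)) (hab : Relation.ReflTransGen r a b) :
    Relation.ReflTransGen p (f a) (f b) := by
  induction hab with
  | refl => exact .refl
  | tail _ h' ih => exact ih.tail (h _ _ h')

theorem W_nil_iff {Q Lab : Type} (M : LTS Q Lab) (q q' : Q) :
    M.W q [] q' ↔ M.Eps q q' := by
  constructor
  · intro h
    generalize hl : ([] : List (ELabel Lab)) = l at h
    cases h with
    | nil h => exact h
    | snoc _ _ _ => simp at hl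
  · exact LTS.W.nil

theorem W_snoc_iff {Q Lab : Type} (M : LTS Q Lab) (q q' : Q) (σ : List (ELabel Lab))
    (x : ELabel Lab) :
    M.W q (σ ++ [x]) q' ↔ ∃ q1 q2, M.W q σ q1 ∧ M.VStep q1 x q2 ∧ M.Eps q2 q' := by
  constructor
  · intro h
    generalize hl : σ ++ [x] = l at h
    cases h with
    | nil h => simp at hl
    | snoc h1 h2 h3 =>
      obtain ⟨rfl, hx⟩ := List.append_inj' hl rfl
      simp at hx
      subst hx
      exact ⟨_, _, h1, h2, h3⟩
  · rintro ⟨q1, q2, h1, h2, h3⟩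
    exact LTS.W.snoc h1 h2 h3

theorem W_eps {Q Lab : Type} (M : LTS Q Lab) (q q' q'' : Q) (σ : List (ELabel Lab))
    (h : M.W q σ q') (h2 : M.Eps q' q'') : M.W q σ q'' := by
  cases h with
  | nil h => exact LTS.W.nil (Relation.ReflTransGen.trans h h2)
  | snoc a b c => exact LTS.W.snoc a b (Relation.ReflTransGen.trans c h2)

theorem par_T_swap {Qs Qe Lab : Type} (s : LTS Qs Lab) (e : LTS Qe Lab)
    (p p' : Qs × Qe) (a : Option Lab) (h : (par s e).T p a p') :
    (par e s).T p.swap a p'.swap := by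
  cases a <;> simp only [par, Prod.fst_swap, Prod.snd_swap] at h ⊢ <;> tauto

theorem par_Eps_swap {Qs Qe Lab : Type} (s : LTS Qs Lab) (e : LTS Qe Lab)
    (p p' : Qs × Qe) (h : (par s e).Eps p p') :
    (par e s).Eps p.swap p'.swap :=
  rtg_lift Prod.swap (fun a b => par_T_swap s e a b none) h

theorem par_V_swap {Qs Qe Lab : Type} (s : LTS Qs Lab) (e : LTS Qe Lab)
    (p p' : Qs × Qe) (x : ELabel Lab) (h : (par s e).VStep p x p') :
    (par e s).VStep p.swap x p'.swap := by
  cases x with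
  | lab l => exact par_T_swap s e p p' _ h
  | delta =>
    obtain ⟨rfl, h1, h2⟩ := h
    refine ⟨rfl, fun x hx q' hq => ?_, fun q' hq => ?_⟩
    · exact h1 x (Or.symm hx) q'.swap (par_T_swap e s _ _ _ hq)
    · exact h2 q'.swap (par_T_swap e s _ _ _ hq)

theorem par_W_swap {Qs Qe Lab : Type} (s : LTS Qs Lab) (e : LTS Qe Lab)
    (p p' : Qs × Qe) (σ : List (ELabel Lab)) (h : (par s e).W p σ p') :
    (par e s).W p.swap σ p'.swap := by
  induction h with
  | nil h => exact LTS.W.nil (par_Eps_swap s e _ _ h)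
  | snoc _ h2 h3 ih => exact LTS.W.snoc ih (par_V_swap s e _ _ _ h2) (par_Eps_swap s e _ _ h3)

theorem par_Eps_iff {Qs Qe Lab : Type} (s : LTS Qs Lab) (e : LTS Qe Lab)
    (p p' : Qs × Qe) : (par s e).Eps p p' ↔ s.Eps p.1 p'.1 ∧ e.Eps p.2 p'.2 := by
  constructor
  · intro h
    induction h with
    | refl => exact ⟨.refl, .refl⟩
    | tail _ h ih =>
      rcases h with ⟨h, h'⟩ | ⟨h, h'⟩
      · exact ⟨ih.1.tail h, h' ▸ ih.2⟩
      · exact ⟨h' ▸ ih.1, ih.2.tail h⟩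
  · rintro ⟨h1, h2⟩
    obtain ⟨a, b⟩ := p
    obtain ⟨a', b'⟩ := p'
    have k1 : (par s e).Eps (a, b) (a', b) :=
      rtg_lift (fun x => (x, b)) (fun x y h => Or.inl ⟨h, rfl⟩) h1
    have k2 : (par s e).Eps (a', b) (a', b') :=
      rtg_lift (fun x => (a', x)) (fun x y h => Or.inr ⟨h, rfl⟩) h2
    exact Relation.ReflTransGen.trans k1 k2

theorem par_quiescent_left {Qs Qe Lab : Type} (s : LTS Qs Lab) (e : LTS Qe Lab)
    (hs : s.WellFormed) (hcomp : Composable s e) (a : Qs) (b : Qe)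
    (hq : (par s e).Quiescent (a, b))
    (hacc : ∀ ℓ, ELabel.lab ℓ ∈ s.outq a → ℓ ∈ e.I → ℓ ∈ e.inq b ∧ ℓ ∈ s.U) :
    s.Quiescent a := by
  obtain ⟨h1, h2⟩ := hq
  refine ⟨fun x hx q' hT => ?_, fun q' hT => h2 (q', b) (Or.inl ⟨hT, rfl⟩)⟩
  have hxs := hs.2.2.2.1 _ _ _ hT
  by_cases hxe : x ∈ e.L
  · have hxI : x ∈ e.I := by
      rcases hxe with h | h
      · exact h
      · have : x ∈ s.U ∩ e.U := ⟨hx, h⟩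
        rw [hcomp] at this
        exact this.elim
    obtain ⟨⟨_, q2, hW⟩, _⟩ := hacc x ⟨hx, q', hT⟩ hxI
    obtain ⟨b1, b2, w1, w2, _⟩ := (W_snoc_iff e b q2 [] _).1 hW
    rw [W_nil_iff] at w1
    rcases Relation.ReflTransGen.cases_head w1 with rfl | ⟨c, hc, _⟩
    · exact h1 x (Or.inl hx) (q', b2) (Or.inr (Or.inr ⟨hxs, hxe, hT, w2⟩))
    · exact h2 (a, c) (Or.inr ⟨hc, rfl⟩)
  · exact h1 x (Or.inl hx) (q', b) (Or.inl ⟨hxs, hxe, hT, rfl⟩)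

theorem par_quiescent_of {Qs Qe Lab : Type} (s : LTS Qs Lab) (e : LTS Qe Lab)
    (a : Qs) (b : Qe) (h1 : s.Quiescent a) (h2 : e.Quiescent b) :
    (par s e).Quiescent (a, b) := by
  have ks : ∀ x, x ∈ s.U → x ∈ s.L := fun x h => Or.inr h
  have ke : ∀ x, x ∈ e.U → x ∈ e.L := fun x h => Or.inr h
  constructor
  · intro x hx q' hT
    have a1 := h1.1 x
    have a2 := h2.1 x
    have := ks x
    have := ke x
    rcases hx with hx | hx <;> rcases hT with ⟨_, _, hT, _⟩ | ⟨_, _, hT, _⟩ | ⟨_, _, hT, hT'⟩ <;>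
      first
      | exact a1 hx _ hT
      | exact a2 hx _ hT
      | exact a2 hx _ hT'
      | tauto
  · rintro q' (⟨h, _⟩ | ⟨h, _⟩)
    · exact h1.2 _ h
    · exact h2.2 _ h

theorem projD_snoc_pos {Lab : Type} (σ : List (ELabel Lab)) (x : ELabel Lab) (Ls : Set Lab)
    (h : ELabel.inL Ls x) : projD (σ ++ [x]) Ls = projD σ Ls ++ [x] := by
  simp [projD, List.filter_append, h]

theorem projD_snoc_neg {Lab : Type} (σ : List (ELabel Lab)) (x : ELabel Lab) (Ls : Set Lab)
    (h : ¬ ELabel.inL Ls x) : projD (σ ++ [x]) Ls = projD σ Ls := by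
  simp [projD, List.filter_append, h]

theorem acceptsOver_prefix {Qs Qe Lab : Type} (s : LTS Qs Lab) (e : LTS Qe Lab)
    (qs : Qs) (qe : Qe) (σ σ' : List (ELabel Lab)) (h : AcceptsOver s e qs qe (σ ++ σ')) :
    AcceptsOver s e qs qe σ := by
  intro σ1 σ2 hh
  exact h σ1 (σ2 ++ σ') (by rw [← hh, List.append_assoc])

/-- if `q_s` mutually accepts `q_e` over `σ`, then
`q_s ∥ q_e ==σ==> q_s' ∥ q_e'` iff `q_s ==σ↾L_s^δ==> q_s'` and
`q_e ==σ↾L_e^δ==> q_e'`. -/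
theorem project_single_trace_from_parcomp {Qs Qe Lab : Type}
    (s : LTS Qs Lab) (e : LTS Qe Lab)
    (hs : s.WellFormed) (he : e.WellFormed)
    (hcomp : Composable s e)
    (qs qs' : Qs) (qe qe' : Qe)
    (σ : List (ELabel Lab)) (hσ : TraceIn (par s e).L σ)
    (hma : MutuallyAcceptsOver s e qs qe σ) :
    (par s e).W (qs, qe) σ (qs', qe') ↔
      s.W qs (projD σ s.L) qs' ∧ e.W qe (projD σ e.L) qe' := by
  induction σ using List.reverseRecOn generalizing qs' qe' with
  | nil =>
    simp only [projD, List.filter_nil, W_nil_iff]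
    exact par_Eps_iff s e _ _
  | append_singleton σ x ih =>
    have hin : ELabel.inL (par s e).L x := hσ x (by simp)
    have ih' := fun a b => ih a b (fun y hy => hσ y (by simp [hy]))
      ⟨acceptsOver_prefix _ _ _ _ _ _ hma.1, acceptsOver_prefix _ _ _ _ _ _ hma.2⟩
    rw [W_snoc_iff]
    cases x with
    | delta =>
      rw [projD_snoc_pos σ .delta s.L trivial, projD_snoc_pos σ .delta e.L trivial, W_snoc_iff, W_snoc_iff]
      constructor
      · rintro ⟨⟨a, b⟩, q2, hW, ⟨rfl, hq⟩, hE⟩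
        have hW' := (ih' a b).1 hW
        have hE' := (par_Eps_iff s e _ _).1 hE
        have hqs : s.Quiescent a := par_quiescent_left s e hs hcomp a b hq
          (hma.2 σ _ rfl b a (par_W_swap s e _ _ _ hW))
        have hq2 : (par e s).Quiescent (b, a) :=
          (par_V_swap s e (a, b) (a, b) ELabel.delta ⟨rfl, hq⟩).2
        have hqe : e.Quiescent b := par_quiescent_left e s he
          (by rw [Composable, Set.inter_comm]; exact hcomp) b a hq2
          (hma.1 σ _ rfl a b hW)
        exact ⟨⟨a, a, hW'.1, ⟨rfl, hqs⟩, hE'.1⟩, ⟨b, b, hW'.2, ⟨rfl, hqe⟩, hE'.2⟩⟩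
      · rintro ⟨⟨a, a2, wa, ⟨rfl, hqs⟩, ea⟩, ⟨b, b2, wb, ⟨rfl, hqe⟩, eb⟩⟩
        exact ⟨(a2, b2), (a2, b2), (ih' _ _).2 ⟨wa, wb⟩,
          ⟨rfl, par_quiescent_of s e _ _ hqs hqe⟩, (par_Eps_iff s e _ _).2 ⟨ea, eb⟩⟩
    | lab l =>
      have hin' : l ∈ s.L ∨ l ∈ e.L := by
        rcases hin with (h | h) | (h | h)
        · exact Or.inl (Or.inl h.1)
        · exact Or.inr (Or.inl h.1)
        · exact Or.inl (Or.inr h)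
        · exact Or.inr (Or.inr h)
      by_cases h1 : l ∈ s.L <;> by_cases h2 : l ∈ e.L
      · rw [projD_snoc_pos σ (.lab l) s.L h1, projD_snoc_pos σ (.lab l) e.L h2, W_snoc_iff, W_snoc_iff]
        constructor
        · rintro ⟨⟨a, b⟩, ⟨a2, b2⟩, hW, hT, hE⟩
          have hW' := (ih' a b).1 hW
          have hE' := (par_Eps_iff s e _ _).1 hE
          rcases hT with ⟨_, h, _⟩ | ⟨_, h, _⟩ | ⟨_, _, t1, t2⟩
          · exact absurd h2 h
          · exact absurd h1 h
          · exact ⟨⟨a, a2, hW'.1, t1, hE'.1⟩, ⟨b, b2, hW'.2, t2, hE'.2⟩⟩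
        · rintro ⟨⟨a, a2, wa, ta, ea⟩, ⟨b, b2, wb, tb, eb⟩⟩
          exact ⟨(a, b), (a2, b2), (ih' _ _).2 ⟨wa, wb⟩,
            Or.inr (Or.inr ⟨h1, h2, ta, tb⟩), (par_Eps_iff s e _ _).2 ⟨ea, eb⟩⟩
      · rw [projD_snoc_pos σ (.lab l) s.L h1, projD_snoc_neg σ (.lab l) e.L h2, W_snoc_iff]
        constructor
        · rintro ⟨⟨a, b⟩, ⟨a2, b2⟩, hW, hT, hE⟩
          have hW' := (ih' a b).1 hW
          have hE' := (par_Eps_iff s e _ _).1 hE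
          rcases hT with ⟨_, _, t1, t2⟩ | ⟨h, _⟩ | ⟨_, h, _⟩
          · obtain rfl : b2 = b := t2
            exact ⟨⟨a, a2, hW'.1, t1, hE'.1⟩, W_eps _ _ _ _ _ hW'.2 hE'.2⟩
          · exact absurd h h2
          · exact absurd h h2
        · rintro ⟨⟨a, a2, wa, ta, ea⟩, wb⟩
          exact ⟨(a, qe'), (a2, qe'), (ih' _ _).2 ⟨wa, wb⟩,
            Or.inl ⟨h1, h2, ta, rfl⟩, (par_Eps_iff s e _ _).2 ⟨ea, .refl⟩⟩
      · rw [projD_snoc_neg σ (.lab l) s.L h1, projD_snoc_pos σ (.lab l) e.L h2, W_snoc_iff]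
        constructor
        · rintro ⟨⟨a, b⟩, ⟨a2, b2⟩, hW, hT, hE⟩
          have hW' := (ih' a b).1 hW
          have hE' := (par_Eps_iff s e _ _).1 hE
          rcases hT with ⟨h, _⟩ | ⟨_, _, t1, t2⟩ | ⟨h, _⟩
          · exact absurd h h1
          · obtain rfl : a2 = a := t2
            exact ⟨W_eps _ _ _ _ _ hW'.1 hE'.1, ⟨b, b2, hW'.2, t1, hE'.2⟩⟩
          · exact absurd h h1
        · rintro ⟨wa, ⟨b, b2, wb, tb, eb⟩⟩
          exact ⟨(qs', b), (qs', b2), (ih' _ _).2 ⟨wa, wb⟩,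
            Or.inr (Or.inl ⟨h2, h1, tb, rfl⟩), (par_Eps_iff s e _ _).2 ⟨.refl, eb⟩⟩
      · tauto
end
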